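/- arXiv:1310.5909 — 6 statements merged into one kernel-verified Lean document; each statement's English description precedes it below -/
import Mathlib

section
/- Let G be a finite group and x ∈ G. If the subgroup ⟨x, g⁻¹xg⟩ generated by x and its conjugate g⁻¹xg is nilpotent for every g ∈ G, then the normal closure of {x} in G is a nilpotent normal subgroup of G. -/
/-- A minimal nontrivial normal subgroup commutes with every nilpotent normal subgroup. -/
theorem Subgroup.commutator_eq_bot_of_minimal_normal {G : Type*} [Group G] {N H : Subgroup G}
    [N.Normal] [H.Normal] [Group.IsNilpotent H]
    (hmin : ∀ K : Subgroup G, K.Normal → K ≤ N → K ≠ ⊥ → K = N) : ⁅N, H⁆ = ⊥ := by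
  by_contra hne
  have heq : ⁅N, H⁆ = N := hmin _ inferInstance (commutator_le_left N H) hne
  have hle : ∀ n, N ≤ H.lowerCentralSeries n := by
    intro n
    induction n with
    | zero => rw [lowerCentralSeries_zero, ← heq]; exact commutator_le_right N H
    | succ n ih =>
      rw [lowerCentralSeries_succ, ← heq]
      exact commutator_mono ih le_rfl
  obtain ⟨n, hn⟩ := (isNilpotent_iff_lowerCentralSeries H).mp ‹Group.IsNilpotent H›
  have hN : N = ⊥ := le_bot_iff.mp (hn ▸ hle n)
  exact hne (by rw [hN, commutator_bot_left])

/-- A nontrivial finite group has a minimal nontrivial normal subgroup. -/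
theorem Subgroup.exists_minimal_normal (G : Type*) [Group G] [Finite G] [Nontrivial G] :
    ∃ N : Subgroup G, N.Normal ∧ N ≠ ⊥ ∧
      ∀ K : Subgroup G, K.Normal → K ≤ N → K ≠ ⊥ → K = N := by
  obtain ⟨N, hN⟩ := (Set.toFinite {N : Subgroup G | N.Normal ∧ N ≠ ⊥}).exists_minimal
    ⟨⊤, inferInstance, top_ne_bot⟩
  exact ⟨N, hN.1.1, hN.1.2, fun K hK hle hne => le_antisymm hle (hN.2 ⟨hK, hne⟩ hle)⟩

/-- A finite group generated by elements lying in nilpotent normal subgroups is nilpotent. -/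
theorem Group.isNilpotent_of_closure_eq_top {G : Type*} [Group G] [Finite G] (S : Set G)
    (hS : ∀ d ∈ S, ∃ H : Subgroup G, H.Normal ∧ Group.IsNilpotent H ∧ d ∈ H)
    (htop : Subgroup.closure S = ⊤) : Group.IsNilpotent G := by
  induction hn : Nat.card G using Nat.strong_induction_on generalizing G with
  | _ n ih =>
  rcases subsingleton_or_nontrivial G with _ | _
  · infer_instance
  obtain ⟨N, hN, hNbot, hmin⟩ := Subgroup.exists_minimal_normal G
  have hNZ : N ≤ Subgroup.center G := by
    rw [← Subgroup.centralizer_univ, ← Subgroup.coe_top, ← htop, Subgroup.centralizer_closure]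
    intro z hz d hd
    obtain ⟨H, hH, hHnil, hdH⟩ := hS d hd
    have hcomm := Subgroup.commutator_eq_bot_of_minimal_normal (H := H) hmin
    rw [Subgroup.commutator_eq_bot_iff_le_centralizer] at hcomm
    exact hcomm hz d hdH
  refine Group.of_quotient_center_nilpotent (ih _ ?_
    (QuotientGroup.mk' (Subgroup.center G) '' S) ?_ ?_ rfl)
  · rw [← hn, Subgroup.card_eq_card_quotient_mul_card_subgroup (Subgroup.center G)]
    apply lt_mul_of_one_lt_right Nat.card_pos
    exact (Subgroup.one_lt_card_iff_ne_bot _).mpr fun h => hNbot (le_bot_iff.mp (h ▸ hNZ))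
  · rintro _ ⟨d, hd, rfl⟩
    obtain ⟨H, hH, hHnil, hdH⟩ := hS d hd
    exact ⟨H.map (QuotientGroup.mk' _), hH.map _ (QuotientGroup.mk'_surjective _),
      Group.nilpotent_of_surjective _ (MonoidHom.subgroupMap_surjective _ H),
      Subgroup.mem_map_of_mem _ hdH⟩
  · rw [← MonoidHom.map_closure, htop]
    exact Subgroup.map_top_of_surjective _ (QuotientGroup.mk'_surjective _)

theorem Subgroup.isNilpotent_of_le {G : Type*} [Group G] {H K : Subgroup G} (hle : H ≤ K)
    (hK : Group.IsNilpotent K) : Group.IsNilpotent H :=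
  Group.nilpotent_of_mulEquiv (subgroupOfEquivOfLe hle)

theorem Subgroup.isNilpotent_map_iff {G G' : Type*} [Group G] [Group G'] {f : G →* G'}
    (hf : Function.Injective f) {H : Subgroup G} :
    Group.IsNilpotent (H.map f) ↔ Group.IsNilpotent H :=
  (Group.isNilpotent_congr (H.equivMapOfInjective f hf)).symm

/-- In a finite group, elements lying in nilpotent normal subgroups generate a nilpotent
subgroup. -/
theorem Subgroup.isNilpotent_closure {G : Type*} [Group G] [Finite G] (S : Set G)
    (hS : ∀ d ∈ S, ∃ H : Subgroup G, H.Normal ∧ Group.IsNilpotent H ∧ d ∈ H) :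
    Group.IsNilpotent (closure S) := by
  refine Group.isNilpotent_of_closure_eq_top (((↑) : closure S → G) ⁻¹' S) ?_
    closure_closure_coe_preimage
  intro d hd
  obtain ⟨H, hH, hHnil, hdH⟩ := hS d hd
  refine ⟨H.subgroupOf (closure S), inferInstance, ?_, hdH⟩
  rw [← isNilpotent_map_iff (closure S).subtype_injective]
  exact isNilpotent_of_le (map_comap_le _ H) hHnil

/-- Proper subgroups of a nilpotent subgroup are properly contained in their normalizer there. -/
theorem Subgroup.eq_of_inf_normalizer_le {G : Type*} [Group G] {X S : Subgroup G} (hXS : X ≤ S)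
    (hS : Group.IsNilpotent S) (hX : S ⊓ normalizer (X : Set G) ≤ X) : X = S := by
  have hc := normalizerCondition_iff_only_full_group_self_normalizing.mp
    (Group.normalizerCondition_of_isNilpotent (G := S)) (X.subgroupOf S) ?_
  · exact le_antisymm hXS (subgroupOf_eq_top.mp hc)
  · rw [← subgroupOf_normalizer_eq hXS]
    refine le_antisymm (fun g hg => hX ⟨g.2, hg⟩) (comap_mono le_normalizer)

/-- The subgroup generated by the elements of `X` in a conjugation-invariant set is normalized by
the normalizer of `X`. -/
theorem Subgroup.normalizer_le_normalizer_closure_inter {G : Type*} [Group G] {D : Set G}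
    (hD : ∀ d ∈ D, ∀ g : G, g * d * g⁻¹ ∈ D) (X : Subgroup G) :
    normalizer (X : Set G) ≤ normalizer (closure (D ∩ X) : Set G) := by
  have hmap : ∀ g ∈ normalizer (X : Set G), ∀ t ∈ closure (D ∩ X),
      g * t * g⁻¹ ∈ closure (D ∩ X) := by
    intro g hg t ht
    induction ht using closure_induction with
    | mem d hd =>
      exact subset_closure ⟨hD d hd.1 g, (mem_normalizer_iff.mp hg d).mp hd.2⟩
    | one => simp
    | mul a b _ _ ha hb => simpa [mul_assoc] using mul_mem ha hb
    | inv a _ ha => simpa [mul_assoc] using inv_mem ha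
  intro g hg
  refine mem_normalizer_iff.mpr fun t => ⟨hmap g hg t, fun ht => ?_⟩
  simpa [mul_assoc] using hmap g⁻¹ (inv_mem hg) _ ht

/-- A proper subgroup of a nilpotent group, where both are generated by elements of a
conjugation-invariant set `D`, is normalized by an element of `D` outside of it. -/
theorem Subgroup.exists_mem_normalizer_notMem {G : Type*} [Group G] {D : Set G}
    (hD : ∀ d ∈ D, ∀ g : G, g * d * g⁻¹ ∈ D) {A B : Set G} (hAD : A ⊆ D) (hBD : B ⊆ D)
    (hAB : A ⊆ B) (hB : Group.IsNilpotent (closure B)) (hne : closure A ≠ closure B) :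
    ∃ a ∈ D, a ∈ closure B ∧ a ∈ normalizer (closure A : Set G) ∧ a ∉ closure A := by
  by_contra! hcon
  have hle : closure A ≤ closure B := closure_mono hAB
  set X : Subgroup G := closure B ⊓ normalizer (closure A : Set G)
  have hAX : closure A ≤ X := le_inf hle le_normalizer
  have hX : closure (D ∩ X) = closure A := by
    refine le_antisymm ((closure_le _).mpr fun a ha => hcon a ha.1 ha.2.1 ha.2.2) ?_
    exact closure_mono fun a ha => ⟨hAD ha, hAX (subset_closure ha)⟩
  have hXB : X = closure B := eq_of_inf_normalizer_le inf_le_left hB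
    (inf_le_inf_left _ (hX ▸ normalizer_le_normalizer_closure_inter hD X))
  refine hne (le_antisymm hle ((closure_le _).mpr fun b hb => ?_))
  have hbX : b ∈ X := hXB ▸ subset_closure hb
  exact hcon b (hBD hb) hbX.1 hbX.2

/-- Suppose that `D` is a conjugation-invariant subset of a finite group `G` such that `D ∩ L`
generates a nilpotent subgroup for each proper subgroup `L`, and that no nilpotent normal subgroup
of `G` meets `D`. Then distinct maximal subgroups have no element of `D` in common. -/
theorem Subgroup.eq_of_isCoatom_of_inter_nonempty {G : Type*} [Group G] [Finite G] {D : Set G}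
    (hD : ∀ d ∈ D, ∀ g : G, g * d * g⁻¹ ∈ D)
    (hnil : ∀ L : Subgroup G, L ≠ ⊤ → Group.IsNilpotent (closure (D ∩ L)))
    (hnormal : ∀ H : Subgroup G, H.Normal → Group.IsNilpotent H → ∀ d ∈ D, d ∉ H)
    {M K : Subgroup G} (hM : IsCoatom M) (hK : IsCoatom K)
    {d : G} (hdD : d ∈ D) (hdM : d ∈ M) (hdK : d ∈ K) : M = K := by
  by_contra hMK
  obtain ⟨A, ⟨⟨M, K, hM, hK, hMK, rfl⟩, d, hdD, hdMK⟩, hmax⟩ := (Set.toFinite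
    {A : Set G | (∃ M K : Subgroup G, IsCoatom M ∧ IsCoatom K ∧ M ≠ K ∧
      A = D ∩ (M ⊓ K : Subgroup G)) ∧ A.Nonempty}).exists_maximal
    ⟨_, ⟨M, K, hM, hK, hMK, rfl⟩, d, hdD, hdM, hdK⟩
  set A : Set G := D ∩ (M ⊓ K : Subgroup G)
  have hAnil : Group.IsNilpotent (closure A) :=
    hnil _ fun h => hM.1 (top_le_iff.mp (h ▸ inf_le_left))
  have hdA : d ∈ closure A := subset_closure ⟨hdD, hdMK⟩
  obtain ⟨L, hL, hTL⟩ := (eq_top_or_exists_le_coatom (normalizer (closure A : Set G))).resolve_left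
    fun h => hnormal _ (normalizer_eq_top_iff.mp h) hAnil d hdD hdA
  have key : ∀ M' : Subgroup G, IsCoatom M' → A ⊆ M' → M' = L := by
    intro M' hM' hAM'
    by_cases hT : closure A = closure (D ∩ M')
    · have hle : M' ≤ L := le_normalizer.trans
        ((normalizer_le_normalizer_closure_inter hD M').trans (hT ▸ hTL))
      exact (hM'.le_iff.mp hle).resolve_left hL.1 |>.symm
    · obtain ⟨a, haD, haM', haN, haA⟩ := exists_mem_normalizer_notMem hD Set.inter_subset_left
        Set.inter_subset_left (fun b hb => ⟨hb.1, hAM' hb⟩) (hnil M' hM'.1) hT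
      by_contra hne
      have haM : a ∈ M' := (closure_le M').mpr Set.inter_subset_right haM'
      have hsub : A ⊆ D ∩ (M' ⊓ L : Subgroup G) := fun b hb =>
        ⟨hb.1, hAM' hb, hTL (le_normalizer (subset_closure hb))⟩
      exact haA (subset_closure
        (hmax ⟨⟨M', L, hM', hL, hne, rfl⟩, d, hsub ⟨hdD, hdMK⟩⟩ hsub ⟨haD, haM, hTL haN⟩))
  exact hMK ((key M hM fun b hb => hb.2.1).trans (key K hK fun b hb => hb.2.2).symm)

/-- If any two conjugates of `x` in a finite group generate a nilpotent subgroup, then all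
conjugates of `x` together generate a nilpotent subgroup. -/
theorem Subgroup.isNilpotent_normalClosure_singleton {G : Type*} [Group G] [Finite G] (x : G)
    (h : ∀ a b : G, IsConj x a → IsConj x b → Group.IsNilpotent (closure {a, b})) :
    Group.IsNilpotent (normalClosure {x}) := by
  induction hn : Nat.card G using Nat.strong_induction_on generalizing G with
  | _ n ih =>
  by_contra hcon
  have hD : ∀ d ∈ conjugatesOf x, ∀ g : G, g * d * g⁻¹ ∈ conjugatesOf x := fun d hd g =>
    IsConj.trans hd (isConj_iff.mpr ⟨g, rfl⟩)
  have hnil : ∀ L : Subgroup G, L ≠ ⊤ → Group.IsNilpotent (closure (conjugatesOf x ∩ L)) := by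
    intro L hL
    have himage : conjugatesOf x ∩ L = L.subtype '' (L.subtype ⁻¹' conjugatesOf x) := by
      rw [Set.image_preimage_eq_inter_range]; simp
    rw [himage, ← MonoidHom.map_closure, isNilpotent_map_iff L.subtype_injective]
    refine isNilpotent_closure _ fun y hy => ⟨normalClosure {y}, inferInstance, ?_,
      subset_normalClosure rfl⟩
    refine ih _ (hn ▸ ?_) y (fun a b ha hb => ?_) rfl
    · rw [← isNilpotent_map_iff L.subtype_injective, MonoidHom.map_closure, Set.image_pair]
      exact h _ _ (IsConj.trans hy (L.subtype.map_isConj ha))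
        (IsConj.trans hy (L.subtype.map_isConj hb))
    · exact lt_of_le_of_ne (card_le_card_group L) fun hc => hL (card_eq_iff_eq_top L |>.mp hc)
  have hnormal : ∀ H : Subgroup G, H.Normal → Group.IsNilpotent H →
      ∀ d ∈ conjugatesOf x, d ∉ H := by
    intro H hH hHnil d hd hdH
    obtain ⟨c, hc⟩ := isConj_iff.mp (IsConj.symm hd)
    exact hcon (isNilpotent_of_le
      (normalClosure_le_normal (Set.singleton_subset_iff.mpr (hc ▸ hH.conj_mem d hdH c))) hHnil)
  have hexists : ∀ d, IsConj x d → ∃ M : Subgroup G, IsCoatom M ∧ x ∈ M ∧ d ∈ M := by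
    intro d hd
    obtain ⟨M, hM, hle⟩ := (eq_top_or_exists_le_coatom (closure {x, d})).resolve_left
      fun htop => hcon (isNilpotent_of_le (le_top.trans htop.ge) (h x d (IsConj.refl x) hd))
    exact ⟨M, hM, hle (subset_closure (by simp)), hle (subset_closure (by simp))⟩
  obtain ⟨M, hM, hxM, -⟩ := hexists x (IsConj.refl x)
  have hsub : conjugatesOf x ⊆ M := by
    intro d hd
    obtain ⟨K, hK, hxK, hdK⟩ := hexists d hd
    rwa [eq_of_isCoatom_of_inter_nonempty hD hnil hnormal hM hK (IsConj.refl x) hxM hxK]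
  have hM' := hnil M hM.1
  rw [Set.inter_eq_left.mpr hsub] at hM'
  exact hcon (by rwa [normalClosure, Group.conjugatesOfSet, Set.biUnion_singleton])

/-- **The Baer–Suzuki theorem.**
If `x` is an element of a finite group `G` such that `⟨x, g⁻¹xg⟩` is nilpotent for
every `g ∈ G`, then the normal closure of `x` in `G` is a nilpotent normal subgroup. -/
theorem statement_4 {G : Type*} [Group G] [Fintype G] (x : G)
    (h : ∀ g : G, Group.IsNilpotent ↥(Subgroup.closure {x, g⁻¹ * x * g})) :
    Group.IsNilpotent ↥(Subgroup.normalClosure {x}) ∧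
      (Subgroup.normalClosure {x}).Normal := by
  refine ⟨Subgroup.isNilpotent_normalClosure_singleton x fun a b ha hb => ?_, inferInstance⟩
  obtain ⟨c, rfl⟩ := isConj_iff.mp ha
  obtain ⟨e, rfl⟩ := isConj_iff.mp hb
  have hmap := (Subgroup.isNilpotent_map_iff (MulAut.conj c).injective
    (f := (MulAut.conj c).toMonoidHom)).mpr (h (e⁻¹ * c))
  rw [MonoidHom.map_closure, Set.image_pair] at hmap
  convert hmap using 5 <;> simp [mul_assoc]
end

section
/- Let p be a prime and k a field of characteristic different from p. Let P be a finite p-group and V a finite-dimensional k-vector space carrying an irreducible (simple) representation ρ of P such that the commutator subgroup ⁅P,P⁆ does not act trivially on V. Let x₁, …, x_s be elements generating P. Then there exists an index i such that p · dim_k C_V(x_i) ≤ dim_k V, where C_V(x) = {v ∈ V : ρ(x)v = v} is the fixed-point subspace of x. -/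
/-- Vectors `v j` on which `X` acts as `Z ^ j` are linearly independent, provided that `X` and `Z`
commute and the differences `Z ^ i - Z ^ j` are injective. -/
theorem eq_zero_of_sum_eq_zero_of_apply_eq_pow {k V : Type*} [Field k] [AddCommGroup V]
    [Module k V] {X Z : Module.End k V} (hXZ : Commute X Z) (n : ℕ)
    (hZ : ∀ i j, i < j → j < n → ∀ v, (Z ^ i) v = (Z ^ j) v → v = 0)
    (v : ℕ → V) (hv : ∀ j < n, X (v j) = (Z ^ j) (v j))
    (hsum : ∑ j ∈ Finset.range n, v j = 0) : ∀ j < n, v j = 0 := by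
  induction n generalizing v with
  | zero => intro j hj; omega
  | succ n ih =>
    have hlow : ∀ j < n, v j = 0 := by
      intro j hj
      refine hZ j n hj (by omega) _ (sub_eq_zero.mp ?_)
      refine ih (fun i j hij hjn => hZ i j hij (by omega))
        (fun j => (Z ^ j) (v j) - (Z ^ n) (v j)) ?_ ?_ j hj
      · intro j hj
        have hX : ∀ m, X ((Z ^ m) (v j)) = (Z ^ m) (X (v j)) := fun m =>
          LinearMap.congr_fun (hXZ.pow_right m).eq (v j)
        have hc : (Z ^ n) ((Z ^ j) (v j)) = (Z ^ j) ((Z ^ n) (v j)) :=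
          LinearMap.congr_fun (Commute.pow_pow (Commute.refl Z) n j).eq (v j)
        simp only [map_sub, hX, hv j (by omega), hc]
      · have h₁ : ∑ j ∈ Finset.range (n + 1), ((Z ^ j) (v j) - (Z ^ n) (v j)) = 0 := by
          rw [Finset.sum_sub_distrib, ← map_sum, hsum, map_zero, sub_zero]
          rw [Finset.sum_congr rfl fun j hj => (hv j (Finset.mem_range.mp hj)).symm, ← map_sum,
            hsum, map_zero]
        simpa [Finset.sum_range_succ] using h₁
    intro j hj
    rcases Nat.lt_succ_iff_lt_or_eq.mp hj with h | rfl
    · exact hlow j h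
    · rwa [Finset.sum_range_succ,
        Finset.sum_eq_zero fun i hi => hlow i (Finset.mem_range.mp hi), zero_add] at hsum

/-- If `X T = Z T X` with `Z` commuting with `X` and `T`, and the powers `Z ^ j`, `j < n`, differ
pairwise by injective maps, then the translates `T ^ j C` of the fixed space `C` of `X` form a
direct sum, so that `n * dim C ≤ dim V`. -/
theorem mul_finrank_ker_sub_id_le {k V : Type*} [Field k] [AddCommGroup V]
    [Module k V] [FiniteDimensional k V] {X T Z : Module.End k V} (hXT : X * T = Z * T * X)
    (hXZ : Commute X Z) (hTZ : Commute T Z) (hT : Function.Injective T) (n : ℕ)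
    (hZ : ∀ i j, i < j → j < n → ∀ v, (Z ^ i) v = (Z ^ j) v → v = 0) :
    n * Module.finrank k (LinearMap.ker (X - LinearMap.id)) ≤ Module.finrank k V := by
  set C := LinearMap.ker (X - LinearMap.id)
  have hC : ∀ c : C, X c = c := fun c =>
    sub_eq_zero.mp (LinearMap.mem_ker.mp c.2)
  have hpow : ∀ j, X * T ^ j = Z ^ j * T ^ j * X := by
    intro j
    have h : SemiconjBy X T (Z * T) := hXT
    rw [← hTZ.symm.mul_pow]
    exact h.pow_right j
  let f : (Fin n → C) →ₗ[k] V :=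
    ∑ j : Fin n, (T ^ (j : ℕ)) ∘ₗ C.subtype ∘ₗ LinearMap.proj j
  have hf : Function.Injective f := by
    rw [injective_iff_map_eq_zero]
    intro c hc
    let v : ℕ → V := fun j => if h : j < n then (T ^ j) (c ⟨j, h⟩) else 0
    have hv : ∀ j < n, v j = 0 := by
      refine eq_zero_of_sum_eq_zero_of_apply_eq_pow hXZ n hZ v ?_ ?_
      · intro j hj
        have h := LinearMap.congr_fun (hpow j) (c ⟨j, hj⟩ : V)
        simp only [Module.End.mul_apply, hC] at h
        simpa [v, hj] using h
      · rw [Finset.sum_range]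
        simpa [f, v, LinearMap.sum_apply] using hc
    ext j
    have h : (T ^ (j : ℕ)) (c j : V) = 0 := by simpa [v] using hv j j.2
    have hTj : Function.Injective (T ^ (j : ℕ)) := by
      rw [Module.End.coe_pow]; exact hT.iterate _
    exact hTj (h.trans (map_zero _).symm)
  have hle := LinearMap.finrank_le_finrank_of_injective hf
  rwa [Module.finrank_pi_fintype, Finset.sum_const, Finset.card_univ, Fintype.card_fin,
    smul_eq_mul] at hle

/-- A noncommutative finite `p`-group contains a noncentral element `a` all of whose commutators
are central of order dividing `p`. -/
theorem IsPGroup.exists_notMem_center_commutator {p : ℕ} [Fact p.Prime] {Q : Type*} [Group Q]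
    [Finite Q] (hQ : IsPGroup p Q) (hne : Subgroup.center Q ≠ ⊤) :
    ∃ a ∉ Subgroup.center Q,
      ∀ g, ∃ z ∈ Subgroup.center Q, g * a = z * a * g ∧ z ^ p = 1 := by
  have hQZ : IsPGroup p (Q ⧸ Subgroup.center Q) := hQ.to_quotient _
  have : Nontrivial (Q ⧸ Subgroup.center Q) := QuotientGroup.nontrivial_iff.mpr hne
  have := hQZ.center_nontrivial
  have hZ : IsPGroup p (Subgroup.center (Q ⧸ Subgroup.center Q)) := hQZ.to_subgroup _
  obtain ⟨n, hn, hcard⟩ := hZ.nontrivial_iff_card.mp this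
  obtain ⟨b, hb⟩ := exists_prime_orderOf_dvd_card' p
    (hcard ▸ dvd_pow_self p hn.ne' : p ∣ Nat.card (Subgroup.center (Q ⧸ Subgroup.center Q)))
  obtain ⟨a, ha⟩ := QuotientGroup.mk_surjective (b : Q ⧸ Subgroup.center Q)
  have hap : a ^ p ∈ Subgroup.center Q := by
    rw [← QuotientGroup.eq_one_iff, QuotientGroup.mk_pow, ha, ← Subgroup.coe_pow, ← hb,
      pow_orderOf_eq_one, Subgroup.coe_one]
  refine ⟨a, fun hac => ?_, fun g => ⟨g * a * g⁻¹ * a⁻¹, ?_, by group, ?_⟩⟩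
  · rw [← QuotientGroup.eq_one_iff, ha, OneMemClass.coe_eq_one] at hac
    rw [hac, orderOf_one] at hb
    exact (Fact.out : p.Prime).one_lt.ne hb
  all_goals
    have hz : g * a * g⁻¹ * a⁻¹ ∈ Subgroup.center Q := by
      rw [← QuotientGroup.eq_one_iff]
      have := Subgroup.mem_center_iff.mp b.2 (g : Q ⧸ Subgroup.center Q)
      simp [ha, this]
  · exact hz
  · have hcomm : Commute (g * a * g⁻¹ * a⁻¹) a := (Subgroup.mem_center_iff.mp hz a).symm
    have h := hcomm.mul_pow p
    rw [inv_mul_cancel_right, conj_pow, Subgroup.mem_center_iff.mp hap g,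
      mul_inv_cancel_right] at h
    exact right_eq_mul.mp h

/-- The faithful case: only noncommutativity of the group is needed. -/
theorem exists_mul_finrank_fixed_le_of_injective {p : ℕ} [Fact p.Prime] {k : Type*} [Field k]
    {Q : Type*} [Group Q] [Finite Q] (hQ : IsPGroup p Q) (hne : Subgroup.center Q ≠ ⊤)
    {V : Type*} [AddCommGroup V] [Module k V] [FiniteDimensional k V]
    (ρ : Representation k Q V) (hρ : Function.Injective ρ)
    (hirr : ∀ U : Submodule k V, (∀ g : Q, ∀ v ∈ U, ρ g v ∈ U) → U = ⊥ ∨ U = ⊤)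
    {ι : Type*} (x : ι → Q) (hgen : Subgroup.closure (Set.range x) = ⊤) :
    ∃ i, p * Module.finrank k (LinearMap.ker (ρ (x i) - LinearMap.id)) ≤
      Module.finrank k V := by
  obtain ⟨a, ha, hcomm⟩ := hQ.exists_notMem_center_commutator hne
  obtain ⟨i, hi⟩ : ∃ i, x i * a ≠ a * x i := by
    by_contra! h
    refine ha (Subgroup.mem_center_iff.mpr fun g => ?_)
    have hle : Subgroup.closure (Set.range x) ≤ Subgroup.centralizer {a} := by
      rw [Subgroup.closure_le]
      rintro _ ⟨i, rfl⟩
      exact Subgroup.mem_centralizer_singleton_iff.mpr (h i)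
    exact Subgroup.mem_centralizer_singleton_iff.mp (hle (hgen ▸ Subgroup.mem_top g))
  obtain ⟨z, hz, hxa, hzp⟩ := hcomm (x i)
  have hz1 : z ≠ 1 := by rintro rfl; exact hi (by simpa using hxa)
  have hord : orderOf z = p := orderOf_eq_prime hzp hz1
  have hcent := Subgroup.mem_center_iff.mp hz
  have hfix : ∀ m, 0 < m → m < p → ∀ v, ρ (z ^ m) v = v → v = 0 := by
    intro m hm hmp v hv
    have hinv : ∀ g, ∀ w ∈ LinearMap.ker (ρ (z ^ m) - LinearMap.id),
        ρ g w ∈ LinearMap.ker (ρ (z ^ m) - LinearMap.id) := by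
      intro g w hw
      have hw' : ρ (z ^ m) w = w := sub_eq_zero.mp (LinearMap.mem_ker.mp hw)
      have hgz : z ^ m * g = g * z ^ m := (Commute.pow_left (hcent g).symm m).eq
      refine LinearMap.mem_ker.mpr (sub_eq_zero.mpr ?_)
      rw [← Module.End.mul_apply, ← map_mul, hgz, map_mul, Module.End.mul_apply, hw',
        LinearMap.id_apply]
    rcases hirr _ hinv with h | h
    · have hmem : v ∈ LinearMap.ker (ρ (z ^ m) - LinearMap.id) :=
        LinearMap.mem_ker.mpr (sub_eq_zero.mpr hv)
      rwa [h, Submodule.mem_bot] at hmem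
    · have hone : ρ (z ^ m) = ρ 1 := by
        rw [map_one]; exact sub_eq_zero.mp (LinearMap.ker_eq_top.mp h)
      exact absurd (hρ hone) (pow_ne_one_of_lt_orderOf hm.ne' (hord ▸ hmp))
  refine ⟨i, mul_finrank_ker_sub_id_le (T := ρ a) (Z := ρ z) ?_ ?_ ?_ ?_ p ?_⟩
  · simp only [← map_mul, hxa]
  · exact (show Commute (x i) z from hcent (x i)).map ρ
  · exact (show Commute a z from hcent a).map ρ
  · exact Function.LeftInverse.injective (g := ρ a⁻¹) fun v => ρ.inv_self_apply a v
  · intro l m hlm hmp v hv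
    refine hfix (m - l) (by omega) (by omega) v ?_
    have hl : Function.Injective (ρ (z ^ l)) :=
      Function.LeftInverse.injective (g := ρ (z ^ l)⁻¹) fun v => ρ.inv_self_apply (z ^ l) v
    apply hl
    rw [← Module.End.mul_apply, ← map_mul, ← pow_add, Nat.add_sub_cancel' hlm.le, map_pow, map_pow]
    exact hv.symm

/-- **Fixed points of generators of a `p`-group in an irreducible representation.**
Let `P` be a finite `p`-group, `k` a field of characteristic different from `p`, and
`V` an irreducible `kP`-module on which `⁅P,P⁆` acts nontrivially. If `x₁, …, x_s`
generate `P`, then for some `i` we have `dim C_V(x_i) ≤ (1/p) · dim V`. -/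
theorem statement_6 {p : ℕ} [Fact p.Prime]
    {k : Type*} [Field k] (hchar : ringChar k ≠ p)
    {P : Type*} [Group P] [Fintype P] (hP : IsPGroup p P)
    {V : Type*} [AddCommGroup V] [Module k V] [FiniteDimensional k V]
    (ρ : Representation k P V)
    (hV : Nontrivial V)
    (hirr : ∀ U : Submodule k V, (∀ g : P, ∀ v ∈ U, ρ g v ∈ U) → U = ⊥ ∨ U = ⊤)
    (hcomm : ¬ ∀ z ∈ commutator P, ρ z = LinearMap.id)
    {s : ℕ} (x : Fin s → P)
    (hgen : Subgroup.closure (Set.range x) = ⊤) :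
    ∃ i : Fin s,
      p * Module.finrank k (LinearMap.ker (ρ (x i) - LinearMap.id)) ≤
        Module.finrank k V := by
  let φ : P →* (Module.End k V)ˣ := MonoidHom.toHomUnits ρ
  let σ : Representation k φ.range V := (Units.coeHom (Module.End k V)).comp φ.range.subtype
  have hσ : ∀ g, σ (φ.rangeRestrict g) = ρ g := fun g => rfl
  have hinj : Function.Injective σ := Units.val_injective.comp Subtype.val_injective
  have hne : Subgroup.center φ.range ≠ ⊤ := by
    intro htop
    refine hcomm fun z hz => ?_
    have hle : commutator P ≤ φ.rangeRestrict.ker := by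
      rw [commutator_def, Subgroup.commutator_le]
      intro g _ h _
      rw [MonoidHom.mem_ker, map_commutatorElement, commutatorElement_eq_one_iff_mul_comm]
      exact Subgroup.mem_center_iff.mp (htop ▸ Subgroup.mem_top (φ.rangeRestrict h)) _
    rw [← hσ, MonoidHom.mem_ker.mp (hle hz), map_one]
    rfl
  have hrange : Subgroup.closure (Set.range (φ.rangeRestrict ∘ x)) = ⊤ := by
    rw [Set.range_comp, ← MonoidHom.map_closure, hgen, ← MonoidHom.range_eq_map,
      MonoidHom.range_eq_top.mpr φ.rangeRestrict_surjective]
  have : Finite φ.range := Finite.of_surjective _ φ.rangeRestrict_surjective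
  exact exists_mul_finrank_fixed_le_of_injective
    (hP.of_surjective φ.rangeRestrict φ.rangeRestrict_surjective) hne σ hinj
    (fun U hU => hirr U fun g => hU (φ.rangeRestrict g)) (φ.rangeRestrict ∘ x) hrange
end

section
/- Let p be a prime and k a field of characteristic different from p. Let P be a finite p-group and V a finite-dimensional k-vector space carrying an irreducible (simple) representation ρ of P such that the commutator subgroup ⁅P,P⁆ does not act trivially on V. Let x₁, …, x_s be elements generating P, each of order exactly p, and assume that V is the internal direct sum of the subspaces [x_i, V] := range(ρ(x_i) − id_V), i.e. these subspaces are linearly independent and together span V. Then P has a section isomorphic to the wreath product Z_p ≀ Z_p. -/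
/-- Cyclic shift of coordinates by `k`, as a multiplicative automorphism of
the direct product of `p` copies of `ZMod p`. -/
def shiftAut (p : ℕ) (k : ZMod p) :
    (ZMod p → Multiplicative (ZMod p)) ≃* (ZMod p → Multiplicative (ZMod p)) where
  toFun f := fun i => f (i + k)
  invFun f := fun i => f (i - k)
  left_inv f := funext fun i => by
    show f (i - k + k) = f i
    rw [sub_add_cancel]
  right_inv f := funext fun i => by
    show f (i + k - k) = f i
    rw [add_sub_cancel_right]
  map_mul' f g := rfl

/-- The action of `ZMod p` on the direct product of `p` copies of `ZMod p`
by cyclically shifting the coordinates. -/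
def shiftHom (p : ℕ) :
    Multiplicative (ZMod p) →* MulAut (ZMod p → Multiplicative (ZMod p)) where
  toFun k := shiftAut p (Multiplicative.toAdd k)
  map_one' := by
    ext f i
    show f (i + 0) = f i
    rw [add_zero]
  map_mul' a b := by
    ext f i
    show f (i + (Multiplicative.toAdd a + Multiplicative.toAdd b))
        = f (i + Multiplicative.toAdd a + Multiplicative.toAdd b)
    rw [add_assoc]

/-- The wreath product `Z_p ≀ Z_p`: the semidirect product of the direct product of
`p` copies of the cyclic group of order `p` by the cyclic group of order `p`,
acting by cyclically shifting the coordinates. -/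
def WreathZpZp (p : ℕ) : Type :=
  (ZMod p → Multiplicative (ZMod p)) ⋊[shiftHom p] Multiplicative (ZMod p)

instance (p : ℕ) : Group (WreathZpZp p) :=
  inferInstanceAs (Group ((ZMod p → Multiplicative (ZMod p)) ⋊[shiftHom p] Multiplicative (ZMod p)))

/-- A group `P` has a section isomorphic to `Q` if some quotient of some subgroup of `P`
is isomorphic to `Q`; equivalently, there is a surjective homomorphism from a subgroup
of `P` onto `Q`. -/
def HasSectionIsomorphicTo (P : Type*) [Group P] (Q : Type*) [Group Q] : Prop :=
  ∃ (H : Subgroup P) (φ : H →* Q), Function.Surjective φ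

namespace WreathZpZp

/-- The element of `Z_p ≀ Z_p` with base coordinates `f` and shift `t`. -/
def mk {p : ℕ} (f : ZMod p → ZMod p) (t : ZMod p) : WreathZpZp p :=
  SemidirectProduct.mk (fun i => Multiplicative.ofAdd (f i)) (Multiplicative.ofAdd t)

theorem mk_mul_mk {p : ℕ} (f g : ZMod p → ZMod p) (s t : ZMod p) :
    mk f s * mk g t = mk (fun i => f i + g (i + s)) (s + t) := rfl

theorem exists_eq_mk {p : ℕ} (a : WreathZpZp p) : ∃ f t, a = mk f t :=
  ⟨fun i => Multiplicative.toAdd (a.left i), Multiplicative.toAdd a.right, rfl⟩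

theorem one_eq_mk {p : ℕ} : (1 : WreathZpZp p) = mk 0 0 := rfl

/-- A nontrivial shift together with a nontrivial element supported on one coordinate
generates `Z_p ≀ Z_p`. -/
theorem eq_top_of_mem {p : ℕ} [Fact p.Prime] (N : Subgroup (WreathZpZp p)) {s : ZMod p}
    (hs : s ≠ 0) (hsN : mk 0 s ∈ N) {i₀ u : ZMod p} (hu : u ≠ 0)
    (huN : mk (Pi.single i₀ u) 0 ∈ N) : N = ⊤ := by
  have hshift : ∀ t, mk 0 t ∈ N := by
    have hmul : ∀ n : ℕ, mk 0 ((n : ZMod p) * s) ∈ N := by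
      intro n
      induction n with
      | zero => simp [← one_eq_mk]
      | succ n ih =>
        have := N.mul_mem ih hsN
        rw [mk_mul_mk] at this
        convert this using 2
        · funext i
          simp
        · push_cast
          ring
    intro t
    have := hmul (t / s).val
    rwa [ZMod.natCast_zmod_val, div_mul_cancel₀ _ hs] at this
  have hsingle : ∀ i, mk (Pi.single i u) 0 ∈ N := by
    intro i
    have := N.mul_mem (N.mul_mem (hshift (i₀ - i)) huN) (hshift (-(i₀ - i)))
    rw [mk_mul_mk, mk_mul_mk] at this
    convert this using 2
    · funext j
      by_cases h : j = i
      · subst h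
        simp
      · have h' : j + (i₀ - i) ≠ i₀ := fun e => h (by linear_combination e)
        simp [h, h']
    · ring
  let A : AddSubmonoid (ZMod p → ZMod p) :=
    { carrier := {g | mk g 0 ∈ N}
      zero_mem' := N.one_mem
      add_mem' := by
        intro a b ha hb
        have := N.mul_mem ha hb
        rw [mk_mul_mk] at this
        simp only [add_zero] at this
        exact this }
  have hbase : ∀ f, mk f 0 ∈ N := by
    intro f
    have hf : f = ∑ i, (f i / u).val • (Pi.single i u : ZMod p → ZMod p) := by
      funext j
      rw [Finset.sum_apply, Finset.sum_eq_single j]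
      · simp [div_mul_cancel₀ _ hu]
      · intro i _ hij
        simp [hij.symm]
      · simp
    have : f ∈ A := by
      rw [hf]
      exact A.sum_mem fun i _ => A.nsmul_mem (hsingle i) _
    exact this
  refine (Subgroup.eq_top_iff' N).2 fun a => ?_
  obtain ⟨f, t, rfl⟩ := exists_eq_mk a
  have := N.mul_mem (hbase f) (hshift t)
  rw [mk_mul_mk] at this
  simpa using this

end WreathZpZp

/-- A group of monomial transformations of `p` independent vectors with coefficients in `μ_p`,
containing the cyclic shift and a reflection, surjects onto `Z_p ≀ Z_p`. -/
theorem hasSection_of_monomial {p : ℕ} [Fact p.Prime] {K P V : Type*} [Field K] [Group P]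
    [AddCommGroup V] [Module K V] (ρ : Representation K P V) (ψ : AddChar (ZMod p) K)
    (hψ : Function.Injective ψ) (w : ZMod p → V) (hw : LinearIndependent K w)
    (S : Set P) (hS : ∀ g ∈ S, ∃ (f : ZMod p → ZMod p) (t : ZMod p),
      ∀ i, ρ g (w i) = ψ (f i) • w (i + t))
    {x : P} (hxS : x ∈ S) (hx : ∀ i, ρ x (w i) = w (i + 1))
    {y : P} (hyS : y ∈ S) {i₀ u : ZMod p} (hu : u ≠ 0) (hy₀ : ρ y (w i₀) = ψ u • w i₀)
    (hy : ∀ i ≠ i₀, ρ y (w i) = w i) :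
    HasSectionIsomorphicTo P (WreathZpZp p) := by
  have hH : ∀ g ∈ Subgroup.closure S, ∃ (f : ZMod p → ZMod p) (t : ZMod p),
      ∀ i, ρ g (w i) = ψ (f i) • w (i + t) := by
    intro g hg
    induction hg using Subgroup.closure_induction with
    | mem g hg => exact hS g hg
    | one => exact ⟨0, 0, by simp⟩
    | mul g h _ _ ihg ihh =>
      obtain ⟨f, t, hf⟩ := ihg
      obtain ⟨f', t', hf'⟩ := ihh
      refine ⟨fun i => f' i + f (i + t'), t' + t, fun i => ?_⟩
      rw [map_mul, Module.End.mul_apply, hf', map_smul, hf, smul_smul, AddChar.map_add_eq_mul,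
        add_assoc]
    | inv g _ ih =>
      obtain ⟨f, t, hf⟩ := ih
      refine ⟨fun i => - f (i - t), -t, fun i => ?_⟩
      apply (ρ.apply_bijective g).1
      rw [map_smul, ρ.self_inv_apply, hf, smul_smul, ← AddChar.map_add_eq_mul]
      simp [sub_eq_add_neg]
  have hw0 : ∀ i, w i ≠ 0 := hw.ne_zero
  have huniq : ∀ (g : P) (f f' : ZMod p → ZMod p) (t t' : ZMod p),
      (∀ i, ρ g (w i) = ψ (f i) • w (i + t)) → (∀ i, ρ g (w i) = ψ (f' i) • w (i + t')) →
      f = f' ∧ t = t' := by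
    intro g f f' t t' h h'
    have ht : t = t' := by
      have h0 := (h 0).symm.trans (h' 0)
      rw [zero_add, zero_add] at h0
      by_contra hne
      have hpair := (LinearIndepOn.pair_iff w hne).1 (hw.linearIndepOn _) (ψ (f 0)) (-ψ (f' 0))
        (by rw [h0, neg_smul, add_neg_cancel])
      have hunit : ψ (f 0) * ψ (-f 0) = 1 := by
        rw [← AddChar.map_add_eq_mul, add_neg_cancel, AddChar.map_zero_eq_one]
      rw [hpair.1, zero_mul] at hunit
      exact zero_ne_one hunit
    subst ht
    refine ⟨funext fun i => hψ ?_, rfl⟩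
    exact smul_left_injective K (hw0 _) ((h i).symm.trans (h' i))
  choose! f t hft using hH
  let φ : Subgroup.closure S →* WreathZpZp p := MonoidHom.mk'
    (fun g => WreathZpZp.mk (f ((g : P)⁻¹)) (t ((g : P)⁻¹))) (by
      intro a b
      rw [WreathZpZp.mk_mul_mk]
      have ha := hft _ (inv_mem a.2)
      have hb := hft _ (inv_mem b.2)
      have hab := hft _ (inv_mem (a * b).2)
      obtain ⟨h1, h2⟩ := huniq _ _ (fun i => f ((a : P)⁻¹) i + f ((b : P)⁻¹) (i + t ((a : P)⁻¹))) _
        (t ((a : P)⁻¹) + t ((b : P)⁻¹)) hab (fun i => by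
          rw [Subgroup.coe_mul, mul_inv_rev, map_mul, Module.End.mul_apply, ha, map_smul, hb,
            smul_smul, AddChar.map_add_eq_mul, add_assoc])
      rw [h1, h2])
  have hφ : ∀ (g : P) (hg : g ∈ Subgroup.closure S) (f' : ZMod p → ZMod p) (t' : ZMod p),
      (∀ i, ρ g (w i) = ψ (f' i) • w (i + t')) → φ ⟨g, hg⟩⁻¹ = WreathZpZp.mk f' t' := by
    intro g hg f' t' h
    obtain ⟨h1, h2⟩ := huniq g _ _ _ _ (hft g hg) h
    simp [φ, h1, h2]
  refine ⟨Subgroup.closure S, φ, MonoidHom.range_eq_top.1 ?_⟩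
  refine WreathZpZp.eq_top_of_mem _ (one_ne_zero : (1 : ZMod p) ≠ 0)
    ⟨_, hφ x (Subgroup.subset_closure hxS) 0 1 fun i => ?_⟩ hu
    ⟨_, hφ y (Subgroup.subset_closure hyS) (Pi.single i₀ u) 0 fun i => ?_⟩
  · simp [hx]
  · by_cases h : i = i₀
    · subst h
      simp [hy₀]
    · simp [hy i h, h]

/-- The standard isomorphism of the dihedral group of order eight with `Z_2 ≀ Z_2`. -/
def dihedralToWreath : DihedralGroup 4 → WreathZpZp 2
  | .r i => (WreathZpZp.mk (Pi.single 0 1) 1) ^ i.val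
  | .sr i => WreathZpZp.mk 0 1 * (WreathZpZp.mk (Pi.single 0 1) 1) ^ i.val

instance : DecidableEq (WreathZpZp 2) := fun a b =>
  decidable_of_iff (a.left 0 = b.left 0 ∧ a.left 1 = b.left 1 ∧ a.right = b.right) (by
    refine ⟨fun h => SemidirectProduct.ext (funext fun i => ?_) h.2.2, fun h => by simp [h]⟩
    fin_cases i
    exacts [h.1, h.2.1])

theorem dihedralToWreath_mul : ∀ a b,
    dihedralToWreath (a * b) = dihedralToWreath a * dihedralToWreath b := by
  decide

theorem dihedralToWreath_surjective : ∀ f t, ∃ a, dihedralToWreath a = WreathZpZp.mk f t := by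
  decide

/-- A homomorphism from the dihedral group of order `2 * n`. -/
def dihedralLift {n : ℕ} [NeZero n] {P : Type*} [Group P] (a s : P) (ha : a * a = 1)
    (hs : s ^ n = 1) (has : a * s * a = s⁻¹) : DihedralGroup n →* P where
  toFun
    | .r i => s ^ i.val
    | .sr i => a * s ^ i.val
  map_one' := by
    change s ^ (0 : ZMod n).val = 1
    simp
  map_mul' := by
    have hadd : ∀ i j : ZMod n, s ^ (i + j).val = s ^ i.val * s ^ j.val := fun i j => by
      rw [ZMod.val_add, ← pow_add, ← pow_eq_pow_mod _ hs]
    have hsub : ∀ i j : ZMod n, s ^ (j - i).val = (s ^ i.val)⁻¹ * s ^ j.val := fun i j => by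
      rw [eq_inv_mul_iff_mul_eq, ← hadd, add_sub_cancel]
    have hconj : ∀ m : ℕ, s ^ m * a = a * (s ^ m)⁻¹ := fun m => by
      have ha' : a⁻¹ = a := inv_eq_of_mul_eq_one_left ha
      have h := conj_pow (i := m) (a := a) (b := s)
      rw [ha', has, inv_pow] at h
      rw [h, mul_assoc, ← mul_assoc a a, ha, one_mul]
    rintro (i | i) (j | j)
    · simp [hadd]
    · simp [hsub, ← mul_assoc, hconj]
    · simp [hadd, mul_assoc]
    · have : a * s ^ i.val * (a * s ^ j.val) = a * (s ^ i.val * a) * s ^ j.val := by group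
      simp [hsub, this, hconj, ← mul_assoc, ha]

/-- Two noncommuting involutions in a `2`-group produce a section `Z_2 ≀ Z_2`. -/
theorem hasSection_of_involutions {P : Type*} [Group P] (hP : IsPGroup 2 P) {a b : P}
    (ha : a * a = 1) (hb : b * b = 1) (hab : a * b ≠ b * a) :
    HasSectionIsomorphicTo P (WreathZpZp 2) := by
  have ha' : a⁻¹ = a := inv_eq_of_mul_eq_one_left ha
  have hb' : b⁻¹ = b := inv_eq_of_mul_eq_one_left hb
  have hinv : (a * b)⁻¹ = b * a := by rw [mul_inv_rev, ha', hb']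
  obtain ⟨n, hn⟩ := (IsPGroup.iff_orderOf.1 hP) (a * b)
  have hn2 : 2 ≤ n := by
    by_contra! h
    apply hab
    have h2 : (a * b) ^ 2 = 1 := by
      rw [← orderOf_dvd_iff_pow_eq_one, hn]
      exact pow_dvd_pow 2 (by omega : n ≤ 1) |>.trans (by norm_num)
    rw [← hinv]
    exact eq_inv_of_mul_eq_one_left (by rw [← pow_two, h2])
  set s := (a * b) ^ 2 ^ (n - 2) with hs
  have hord : orderOf s = 4 := by
    rw [hs, orderOf_pow_of_dvd (by positivity) (hn ▸ pow_dvd_pow 2 (by omega)), hn,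
      Nat.pow_div (by omega) (by norm_num)]
    rw [show n - (n - 2) = 2 by omega]
  have has : a * s * a = s⁻¹ := by
    have h := conj_pow (i := 2 ^ (n - 2)) (a := a) (b := a * b)
    rw [ha'] at h
    rw [hs, ← h, ← inv_pow, hinv, ← mul_assoc, ha, one_mul]
  have hs4 : s ^ 4 = 1 := hord ▸ pow_orderOf_eq_one s
  let j := dihedralLift a s ha hs4 has
  have hsa : ∀ m : ℕ, a ≠ s ^ m := by
    intro m h
    rw [h, ((Commute.refl s).pow_left m).eq, mul_assoc, ← h, ha, mul_one] at has
    have : s ^ 2 = 1 := by rw [pow_two]; nth_rewrite 1 [has]; simp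
    have := orderOf_dvd_of_pow_eq_one this
    rw [hord] at this
    omega
  have hj : Function.Injective j := by
    rw [injective_iff_map_eq_one]
    rintro (i | i) h
    · have h' : s ^ i.val = 1 := h
      have := orderOf_dvd_of_pow_eq_one h'
      rw [hord] at this
      have hi : i = 0 := by
        rw [← ZMod.val_eq_zero]
        exact Nat.eq_zero_of_dvd_of_lt this (ZMod.val_lt i)
      rw [hi, DihedralGroup.one_def]
    · have h' : a * s ^ i.val = 1 := h
      have := eq_inv_of_mul_eq_one_left h'
      have h3 : (s ^ i.val)⁻¹ = (s ^ i.val) ^ 3 := inv_eq_of_mul_eq_one_left (by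
        rw [← pow_succ, ← pow_mul, mul_comm, pow_mul, hs4, one_pow])
      rw [h3, ← pow_mul] at this
      exact absurd this (hsa _)
  let e := MonoidHom.ofInjective hj
  refine ⟨j.range, (MonoidHom.mk' dihedralToWreath dihedralToWreath_mul).comp
    e.symm.toMonoidHom, fun y => ?_⟩
  obtain ⟨f, t, rfl⟩ := WreathZpZp.exists_eq_mk y
  obtain ⟨d, hd⟩ := dihedralToWreath_surjective f t
  exact ⟨e d, by simpa using hd⟩

section LinearAlgebra

variable {K V ι : Type*} [Field K] [AddCommGroup V] [Module K V] [FiniteDimensional K V]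
  [Fintype ι]

/-- The dimension of a sum of subspaces is at most the sum of the dimensions. -/
theorem finrank_iSup_le_sum (f : ι → Submodule K V) :
    Module.finrank K (⨆ i, f i : Submodule K V) ≤ ∑ i, Module.finrank K (f i) := by
  classical
  rw [← Finset.sup_univ_eq_iSup]
  induction (Finset.univ : Finset ι) using Finset.induction_on with
  | empty => simp
  | insert a s ha ih =>
    rw [Finset.sup_insert, Finset.sum_insert ha]
    exact (Submodule.finrank_add_le_finrank_add_finrank _ _).trans (by omega)

/-- The dimensions of independent subspaces of `U` add up to at most the dimension of `U`. -/
theorem sum_finrank_le_of_iSupIndep {f : ι → Submodule K V} (hf : iSupIndep f)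
    {U : Submodule K V} (hU : ∀ i, f i ≤ U) :
    ∑ i, Module.finrank K (f i) ≤ Module.finrank K U := by
  classical
  have key : ∀ s : Finset ι, ∑ i ∈ s, Module.finrank K (f i) =
      Module.finrank K (s.sup f : Submodule K V) := by
    intro s
    induction s using Finset.induction_on with
    | empty => rw [Finset.sum_empty, Finset.sup_empty, finrank_bot]
    | insert a s ha ih =>
      have hdis : f a ⊓ s.sup f = ⊥ := by
        rw [← disjoint_iff, Finset.sup_eq_iSup]
        exact (hf a).mono_right (iSup₂_le fun i hi =>
          le_iSup₂_of_le i (fun h : i = a => ha (h ▸ hi)) le_rfl)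
      have := Submodule.finrank_sup_add_finrank_inf_eq (f a) (s.sup f)
      rw [hdis, finrank_bot, add_zero] at this
      rw [Finset.sup_insert, Finset.sum_insert ha, ih, this]
  rw [key]
  exact Submodule.finrank_mono (Finset.sup_le fun i _ => hU i)

end LinearAlgebra

section Commutator

variable {K P V : Type*} [Field K] [Group P] [AddCommGroup V] [Module K V]
  (ρ : Representation K P V)

/-- The subspace `[g, W]`. -/
def commSub (g : P) (W : Submodule K V) : Submodule K V := W.map (ρ g - LinearMap.id)

variable {ρ}

theorem sub_mem_commSub {g : P} {W : Submodule K V} {w : V} (hw : w ∈ W) :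
    ρ g w - w ∈ commSub ρ g W := ⟨w, hw, rfl⟩

theorem commSub_mono (g : P) {U W : Submodule K V} (h : U ≤ W) :
    commSub ρ g U ≤ commSub ρ g W := Submodule.map_mono h

theorem commSub_le {g : P} {U : Submodule K V} (h : ∀ u ∈ U, ρ g u ∈ U) :
    commSub ρ g U ≤ U := by
  rintro _ ⟨u, hu, rfl⟩
  exact U.sub_mem (h u hu) hu

theorem apply_eq_of_commSub_eq_bot {g : P} {W : Submodule K V} (h : commSub ρ g W = ⊥) {w : V}
    (hw : w ∈ W) : ρ g w = w := by
  have := sub_mem_commSub (ρ := ρ) (g := g) hw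
  rw [h, Submodule.mem_bot, sub_eq_zero] at this
  exact this

theorem apply_eq_of_finrank_commSub_eq_zero [FiniteDimensional K V] {g : P} {W : Submodule K V}
    (h : Module.finrank K (commSub ρ g W) = 0) {w : V} (hw : w ∈ W) : ρ g w = w :=
  apply_eq_of_commSub_eq_bot (Submodule.finrank_eq_zero.1 h) hw

theorem finrank_map_apply (g : P) (U : Submodule K V) :
    Module.finrank K (U.map (ρ g)) = Module.finrank K U :=
  (Submodule.equivMapOfInjective _ (ρ.apply_bijective g).1 U).finrank_eq.symm

theorem commSub_conj (g h : P) (U : Submodule K V) :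
    commSub ρ (h⁻¹ * g * h) U = (commSub ρ g (U.map (ρ h))).map (ρ h⁻¹) := by
  unfold commSub
  rw [← Submodule.map_comp, ← Submodule.map_comp]
  congr 1
  ext v
  simp

/-- A subspace stable under a set of elements of a finite group is stable under the subgroup
they generate. -/
theorem invariant_closure [Finite P] {S : Set P} {U : Submodule K V}
    (h : ∀ g ∈ S, ∀ u ∈ U, ρ g u ∈ U) : ∀ g ∈ Subgroup.closure S, ∀ u ∈ U, ρ g u ∈ U := by
  intro g hg
  have hpow : ∀ g : P, (∀ u ∈ U, ρ g u ∈ U) → ∀ n : ℕ, ∀ u ∈ U, ρ (g ^ n) u ∈ U := by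
    intro g hg n
    induction n with
    | zero => simp
    | succ n ih =>
      intro u hu
      rw [pow_succ, map_mul, Module.End.mul_apply]
      exact ih _ (hg _ hu)
  induction hg using Subgroup.closure_induction with
  | mem g hg => exact h g hg
  | one => simp
  | mul a b _ _ iha ihb =>
    intro u hu
    rw [map_mul, Module.End.mul_apply]
    exact iha _ (ihb _ hu)
  | inv a _ iha =>
    rw [← zpow_neg_one]
    obtain ⟨n, hn⟩ := (isOfFinOrder_of_finite a).mem_powers_iff_mem_zpowers.2 ⟨-1, rfl⟩
    simp only at hn
    rw [← hn]
    exact hpow a iha n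

/-- If generators commute pairwise on `W`, so do all elements of the group. -/
theorem commute_closure {S : Set P} {W : Submodule K V}
    (hW : ∀ g ∈ Subgroup.closure S, ∀ w ∈ W, ρ g w ∈ W)
    (h : ∀ a ∈ S, ∀ b ∈ S, ∀ w ∈ W, ρ (a * b) w = ρ (b * a) w) :
    ∀ a ∈ Subgroup.closure S, ∀ b ∈ Subgroup.closure S, ∀ w ∈ W, ρ (a * b) w = ρ (b * a) w := by
  simp only [map_mul, Module.End.mul_apply] at h ⊢
  have key : ∀ b : P, (∀ w ∈ W, ρ b w ∈ W) → (∀ a ∈ S, ∀ w ∈ W, ρ a (ρ b w) = ρ b (ρ a w)) →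
      ∀ a ∈ Subgroup.closure S, ∀ w ∈ W, ρ a (ρ b w) = ρ b (ρ a w) := by
    intro b hb hS a ha
    induction ha using Subgroup.closure_induction with
    | mem a ha => exact hS a ha
    | one => simp
    | mul a c ha hc iha ihc =>
      intro w hw
      rw [map_mul, Module.End.mul_apply, Module.End.mul_apply, ihc w hw, iha _ (hW c hc w hw)]
    | inv a ha iha =>
      intro w hw
      apply (ρ.apply_bijective a).1
      rw [iha _ (hW _ (inv_mem ha) w hw), ρ.self_inv_apply, ρ.self_inv_apply]
  intro a ha b hb
  refine key b (hW b hb) (fun a ha w hw => ?_) a ha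
  exact (key a (hW a (Subgroup.subset_closure ha)) (fun c hc w hw => (h c hc a ha w hw)) b hb
    w hw).symm

end Commutator

/-- A nonabelian `p`-group of linear maps with only scalar endomorphisms contains an element
that every group element commutes with up to a `p`-th root of unity, not always trivial. -/
theorem exists_commuting_up_to_root {p : ℕ} [Fact p.Prime] {K G W : Type*} [Field K]
    [Group G] [Finite G] (hG : IsPGroup p G) [AddCommGroup W] [Module K W]
    (σ : Representation K G W)
    (hscalar : ∀ T : Module.End K W, (∀ g, T * σ g = σ g * T) → ∃ μ : K, T = μ • 1)
    [Nontrivial W] (hne : ¬ ∀ g h : G, σ (g * h) = σ (h * g)) :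
    ∃ (c : G) (θ : G →* K), (∀ g, σ c * σ g = θ g • (σ g * σ c)) ∧ (∀ g, θ g ^ p = 1) ∧
      ∃ g, θ g ≠ 1 := by
  let Z : Subgroup G :=
    { carrier := {z | ∀ g, σ (z * g) = σ (g * z)}
      one_mem' := by simp
      mul_mem' := by
        intro a b ha hb g
        have e1 : σ (a * b * g) = σ a * σ (b * g) := by rw [mul_assoc, map_mul]
        have e2 : σ (a * (g * b)) = σ (a * g) * σ b := by rw [← mul_assoc, map_mul]
        rw [e1, hb g, ← map_mul, e2, ha g, ← map_mul, mul_assoc]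
      inv_mem' := by
        intro a ha g
        have h1 : σ (a⁻¹ * g) = σ a⁻¹ * σ (g * a) * σ a⁻¹ := by
          rw [← map_mul, ← map_mul]
          congr 1
          group
        rw [h1, ← ha g, ← map_mul, ← map_mul]
        congr 1
        group }
  have hZmem : ∀ z, z ∈ Z ↔ ∀ g, σ (z * g) = σ (g * z) := fun z => Iff.rfl
  have hZn : Z.Normal := ⟨fun z hz g h => by
    have h1 : σ (g * z * g⁻¹ * h) = σ g * σ (z * (g⁻¹ * h)) := by
      rw [← map_mul]
      congr 1
      group
    have h2 : σ (h * (g * z * g⁻¹)) = σ (h * g) * σ (z * g⁻¹) := by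
      rw [← map_mul]
      congr 1
      group
    rw [h1, h2, hz, hz, ← map_mul, ← map_mul]
    congr 1
    group⟩
  have hZtop : Z ≠ ⊤ := fun h => hne fun g => (hZmem g).1 (h ▸ Subgroup.mem_top g)
  have : Nontrivial (G ⧸ Z) := QuotientGroup.nontrivial_iff.2 hZtop
  have hQ : IsPGroup p (G ⧸ Z) := hG.to_quotient Z
  have := hQ.center_nontrivial
  have hC : IsPGroup p (Subgroup.center (G ⧸ Z)) := hQ.to_subgroup _
  obtain ⟨⟨q, hqc⟩, hq⟩ := exists_prime_orderOf_dvd_card' (G := Subgroup.center (G ⧸ Z)) p (by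
    obtain ⟨n, hn0, hn⟩ := (hC.nontrivial_iff_card).1 this
    rw [hn]
    exact dvd_pow_self p hn0.ne')
  rw [Subgroup.orderOf_mk] at hq
  obtain ⟨c, rfl⟩ := QuotientGroup.mk_surjective q
  have hcp : c ^ p ∈ Z := by
    rw [← QuotientGroup.eq_one_iff, QuotientGroup.mk_pow, ← hq, pow_orderOf_eq_one]
  have hcZ : c ∉ Z := by
    intro h
    rw [(QuotientGroup.eq_one_iff c).2 h, orderOf_one] at hq
    exact (Fact.out : p.Prime).one_lt.ne hq
  have hcomm : ∀ g, c * g * c⁻¹ * g⁻¹ ∈ Z := by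
    intro g
    rw [← QuotientGroup.eq_one_iff]
    have := Subgroup.mem_center_iff.1 hqc (g : G ⧸ Z)
    rw [QuotientGroup.mk_mul, QuotientGroup.mk_mul, QuotientGroup.mk_mul, ← this]
    simp
  have hθ : ∀ g, ∃ μ : K, σ c * σ g = μ • (σ g * σ c) := by
    intro g
    obtain ⟨μ, hμ⟩ := hscalar (σ (c * g * c⁻¹ * g⁻¹)) fun h => by
      rw [← map_mul, ← map_mul, hcomm g h]
    refine ⟨μ, ?_⟩
    have : σ (c * g * c⁻¹ * g⁻¹) * (σ g * σ c) = σ c * σ g := by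
      rw [← map_mul, ← map_mul, ← map_mul]
      congr 1
      group
    rw [← this, hμ, smul_mul_assoc, one_mul]
  choose θ hθ using hθ
  have hinj : ∀ (g : G) (a b : K), a • σ g = b • σ g → a = b := by
    intro g a b h
    obtain ⟨w, hw⟩ := exists_ne (0 : W)
    have hgw : σ g w ≠ 0 := fun h => hw ((σ.apply_bijective g).1 (by rw [h, map_zero]))
    exact smul_left_injective K hgw (by simpa using LinearMap.congr_fun h w)
  have hone : ∀ g, σ c * σ g = σ g * σ c → θ g = 1 := fun g h => by
    have h1 := hθ g
    rw [h, ← map_mul] at h1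
    exact hinj (g * c) _ _ (by rw [one_smul]; exact h1.symm)
  let Θ : G →* K :=
    { toFun := θ
      map_one' := hone 1 (by simp)
      map_mul' := fun g h => by
        have h1 : σ c * σ (g * h) = (θ g * θ h) • (σ (g * h) * σ c) := by
          rw [map_mul, ← mul_assoc, hθ g, smul_mul_assoc, mul_assoc, hθ h, mul_smul_comm,
            smul_smul, ← mul_assoc]
        rw [hθ, ← map_mul] at h1
        exact hinj _ _ _ h1 }
  refine ⟨c, Θ, hθ, fun g => ?_, ?_⟩
  · have hpow : ∀ n : ℕ, σ (c ^ n) * σ g = (θ g ^ n) • (σ g * σ (c ^ n)) := by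
      intro n
      induction n with
      | zero => simp
      | succ n ih =>
        rw [pow_succ, map_mul, mul_assoc, hθ g, mul_smul_comm, ← mul_assoc, ih, smul_mul_assoc,
          smul_smul, pow_succ, mul_assoc, mul_comm (θ g)]
    have h1 := hpow p
    rw [← map_mul, hcp g, ← map_mul] at h1
    exact hinj _ _ _ (by rw [one_smul]; exact h1.symm)
  · by_contra! h
    exact hcZ fun g => by
      have h1 := hθ g
      rw [show θ g = 1 from h g, one_smul] at h1
      rw [map_mul, map_mul, h1]

section Irreducible

variable {K P V : Type*} [Field K] [Group P] [AddCommGroup V] [Module K V]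

/-- `W` is an irreducible representation of the subgroup `H`. -/
structure IsIrredOn (ρ : Representation K P V) (H : Subgroup P) (W : Submodule K V) : Prop where
  ne_bot : W ≠ ⊥
  apply_mem : ∀ g ∈ H, ∀ w ∈ W, ρ g w ∈ W
  eq_bot_or_eq : ∀ U ≤ W, (∀ g ∈ H, ∀ u ∈ U, ρ g u ∈ U) → U = ⊥ ∨ U = W

/-- `H` acts on `W` as an abelian group. -/
def CommutesOn (ρ : Representation K P V) (H : Subgroup P) (W : Submodule K V) : Prop :=
  ∀ g ∈ H, ∀ h ∈ H, ∀ w ∈ W, ρ (g * h) w = ρ (h * g) w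

variable {ρ : Representation K P V} {H : Subgroup P} {W : Submodule K V}

/-- Schur's lemma. -/
theorem IsIrredOn.exists_eq_smul [IsAlgClosed K] [FiniteDimensional K V] (h : IsIrredOn ρ H W)
    (T : Module.End K W)
    (hT : ∀ g (hg : g ∈ H) (w : W), (T ⟨ρ g w, h.apply_mem g hg w w.2⟩ : V) = ρ g (T w)) :
    ∃ μ : K, T = μ • 1 := by
  have : Nontrivial W := Submodule.nontrivial_iff_ne_bot.2 h.ne_bot
  obtain ⟨μ, hμ⟩ := Module.End.exists_eigenvalue T
  refine ⟨μ, ?_⟩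
  have hinv : ∀ g ∈ H, ∀ u ∈ (T.eigenspace μ).map W.subtype,
      ρ g u ∈ (T.eigenspace μ).map W.subtype := by
    rintro g hg _ ⟨u, hu, rfl⟩
    refine ⟨⟨ρ g u, h.apply_mem g hg u u.2⟩, ?_, rfl⟩
    rw [SetLike.mem_coe, Module.End.mem_eigenspace_iff] at hu ⊢
    apply Subtype.ext
    rw [hT g hg, hu]
    simp
  rcases h.eq_bot_or_eq _ (Submodule.map_subtype_le _ _) hinv with hU | hU
  · exact absurd (Submodule.map_injective_of_injective W.subtype_injective
      (by rw [hU, Submodule.map_bot])) hμ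
  · ext w
    have hw : (w : V) ∈ (T.eigenspace μ).map W.subtype := by
      rw [hU]
      exact w.2
    obtain ⟨w', hw', e⟩ := hw
    obtain rfl : w' = w := Subtype.ext e
    rw [SetLike.mem_coe, Module.End.mem_eigenspace_iff] at hw'
    rw [hw']
    simp

theorem IsIrredOn.exists_commuting_up_to_root {p : ℕ} [Fact p.Prime] [Finite P]
    (hP : IsPGroup p P) [IsAlgClosed K] [FiniteDimensional K V] (h : IsIrredOn ρ H W)
    (hne : ¬ CommutesOn ρ H W) :
    ∃ c ∈ H, ∃ θ : P → K, (∀ g ∈ H, ∀ h ∈ H, θ (g * h) = θ g * θ h) ∧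
      (∀ g ∈ H, θ g ^ p = 1) ∧ (∃ g ∈ H, θ g ≠ 1) ∧
      ∀ g ∈ H, ∀ w ∈ W, ρ c (ρ g w) = θ g • ρ g (ρ c w) := by
  classical
  have : Nontrivial W := Submodule.nontrivial_iff_ne_bot.2 h.ne_bot
  let σ : Representation K H W :=
    { toFun := fun g => (ρ g).restrict (h.apply_mem g g.2)
      map_one' := by ext; simp
      map_mul' := fun a b => by ext; simp }
  obtain ⟨c, Θ, h1, h2, g, h3⟩ := _root_.exists_commuting_up_to_root (hP.to_subgroup H) σ
    (fun T hT => h.exists_eq_smul T fun g hg w =>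
      congrArg Subtype.val (LinearMap.congr_fun (hT ⟨g, hg⟩) w))
    (fun hc => hne fun g hg k hk w hw =>
      congrArg Subtype.val (LinearMap.congr_fun (hc ⟨g, hg⟩ ⟨k, hk⟩) ⟨w, hw⟩))
  obtain ⟨θ, hθ⟩ : ∃ θ : P → K, ∀ a (ha : a ∈ H), θ a = Θ ⟨a, ha⟩ :=
    ⟨fun g => if hg : g ∈ H then Θ ⟨g, hg⟩ else 1, fun a ha => dif_pos ha⟩
  refine ⟨c, c.2, θ, ?_, ?_, ⟨g, g.2, ?_⟩, ?_⟩
  · intro a ha b hb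
    rw [hθ a ha, hθ b hb, hθ _ (mul_mem ha hb), ← map_mul]
    rfl
  · intro a ha
    rw [hθ a ha, h2]
  · rwa [hθ g g.2]
  · intro a ha w hw
    rw [hθ a ha]
    exact congrArg Subtype.val (LinearMap.congr_fun (h1 ⟨a, ha⟩) ⟨w, hw⟩)

end Irreducible

/-- A decomposition of `W` into `p` subspaces which `H` permutes cyclically. -/
structure BlockSystem (p : ℕ) {K P V : Type*} [Field K] [Group P] [AddCommGroup V] [Module K V]
    (ρ : Representation K P V) (H : Subgroup P) (W : Submodule K V) where
  /-- The blocks. -/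
  block : ZMod p → Submodule K V
  /-- The shift of the blocks induced by a group element. -/
  shift : P → ZMod p
  indep : iSupIndep block
  iSup_eq : ⨆ i, block i = W
  shift_mul : ∀ g ∈ H, ∀ h ∈ H, shift (g * h) = shift g + shift h
  apply_mem : ∀ g ∈ H, ∀ i, ∀ v ∈ block i, ρ g v ∈ block (i + shift g)

/-- A nonabelian irreducible `p`-group over an algebraically closed field has a block system. -/
theorem IsIrredOn.exists_blockSystem {p : ℕ} [Fact p.Prime] {K P V : Type*} [Field K]
    [IsAlgClosed K] [Group P] [Finite P] (hP : IsPGroup p P) [AddCommGroup V] [Module K V]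
    [FiniteDimensional K V] {ρ : Representation K P V} {W : Submodule K V} {ι : Type*}
    {x : ι → P} (h : IsIrredOn ρ (Subgroup.closure (Set.range x)) W)
    (hne : ¬ CommutesOn ρ (Subgroup.closure (Set.range x)) W) :
    ∃ (ψ : AddChar (ZMod p) K) (B : BlockSystem p ρ (Subgroup.closure (Set.range x)) W) (j : ι),
      Function.Injective ψ ∧ B.shift (x j) = 1 := by
  obtain ⟨c, hc, θ, hmul, hroot, ⟨g, hg, hg1⟩, hθ⟩ := h.exists_commuting_up_to_root hP hne
  have hx : ∀ j, x j ∈ Subgroup.closure (Set.range x) := fun j =>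
    Subgroup.subset_closure ⟨j, rfl⟩
  have hone : θ 1 = 1 := by
    have h1 := hmul 1 (one_mem _) 1 (one_mem _)
    rw [mul_one] at h1
    have h0 : θ 1 ≠ 0 := fun h0 => by
      have := hroot 1 (one_mem _)
      rw [h0, zero_pow (Fact.out : p.Prime).ne_zero] at this
      exact zero_ne_one this
    exact (mul_eq_left₀ h0).1 h1.symm
  obtain ⟨j, hj⟩ : ∃ j, θ (x j) ≠ 1 := by
    by_contra! hall
    apply hg1
    clear hg1
    induction hg using Subgroup.closure_induction with
    | mem g hg =>
      obtain ⟨j, rfl⟩ := hg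
      exact hall j
    | one => exact hone
    | mul a b ha hb iha ihb => rw [hmul a ha b hb, iha, ihb, one_mul]
    | inv a ha iha =>
      have := hmul a ha a⁻¹ (inv_mem ha)
      rwa [mul_inv_cancel, hone, iha, one_mul, eq_comm] at this
  have hζ : IsPrimitiveRoot (θ (x j)) p :=
    IsPrimitiveRoot.iff_orderOf.2 (orderOf_eq_prime (hroot _ (hx j)) hj)
  let ψ : AddChar (ZMod p) K := AddChar.zmodChar p hζ.pow_eq_one
  have hψapply : ∀ i, ψ i = θ (x j) ^ i.val := fun i => rfl
  have hψ : Function.Injective ψ := fun a b hab =>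
    ZMod.val_injective p (hζ.pow_inj (ZMod.val_lt a) (ZMod.val_lt b) hab)
  have hτ : ∀ g ∈ Subgroup.closure (Set.range x), ∃ t, ψ t = θ g := by
    intro g hg
    obtain ⟨i, hi, e⟩ := hζ.eq_pow_of_pow_eq_one (hroot g hg)
    refine ⟨i, ?_⟩
    rw [hψapply, ZMod.val_natCast, Nat.mod_eq_of_lt hi, e]
  choose! τ hτ using hτ
  have hnt : Nontrivial W := Submodule.nontrivial_iff_ne_bot.2 h.ne_bot
  obtain ⟨μ, hμ⟩ := Module.End.exists_eigenvalue ((ρ c).restrict (h.apply_mem c hc))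
  obtain ⟨w, hw⟩ := hμ.exists_hasEigenvector
  have hcw : ρ c (w : V) = μ • (w : V) := congrArg Subtype.val hw.apply_eq_smul
  have hw0 : (w : V) ≠ 0 := fun h0 => hw.2 (Subtype.ext h0)
  have hμ0 : μ ≠ 0 := by
    rintro rfl
    rw [zero_smul] at hcw
    exact hw0 ((ρ.apply_bijective c).1 (by rw [hcw, map_zero]))
  let L : ZMod p → Submodule K V := fun i => W ⊓ Module.End.eigenspace (ρ c) (ψ i * μ)
  have hmem : ∀ i v, v ∈ L i ↔ v ∈ W ∧ ρ c v = (ψ i * μ) • v := fun i v => by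
    rw [Submodule.mem_inf, Module.End.mem_eigenspace_iff]
  have hind : iSupIndep L := by
    refine ((Module.End.eigenspaces_iSupIndep (ρ c)).comp (f := fun i => ψ i * μ) ?_).mono
      fun i => inf_le_right
    intro a b hab
    exact hψ (mul_right_cancel₀ hμ0 hab)
  have hmap : ∀ g ∈ Subgroup.closure (Set.range x), ∀ i, ∀ v ∈ L i, ρ g v ∈ L (i + τ g) := by
    intro g hg i v hv
    rw [hmem] at hv ⊢
    refine ⟨h.apply_mem g hg v hv.1, ?_⟩
    rw [hθ g hg v hv.1, hv.2, map_smul, smul_smul, ← hτ g hg, AddChar.map_add_eq_mul]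
    ring_nf
  have hsup : ⨆ i, L i = W := by
    refine (h.eq_bot_or_eq _ (iSup_le fun i => inf_le_left) fun g hg u hu => ?_).resolve_left
      fun hbot => hw0 ?_
    · refine Submodule.iSup_induction L (motive := fun u => ρ g u ∈ ⨆ i, L i) hu ?_ ?_ ?_
      · intro i v hv
        exact Submodule.mem_iSup_of_mem _ (hmap g hg i v hv)
      · simp
      · intro a b ha hb
        rw [map_add]
        exact add_mem ha hb
    · rw [← Submodule.mem_bot K, ← hbot]
      exact Submodule.mem_iSup_of_mem 0 ((hmem 0 w).2 ⟨w.2, by simpa using hcw⟩)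
  refine ⟨ψ, ⟨L, τ, hind, hsup, fun g hg k hk => hψ ?_, hmap⟩, j, hψ, hψ ?_⟩
  · rw [AddChar.map_add_eq_mul, hτ _ hg, hτ _ hk, hτ _ (mul_mem hg hk), hmul g hg k hk]
  · change ψ (τ (x j)) = ψ 1
    rw [hτ _ (hx j), hψapply, ZMod.val_one, pow_one]

namespace BlockSystem

variable {p : ℕ} {K P V : Type*} [Field K] [Group P] [AddCommGroup V] [Module K V]
  {ρ : Representation K P V} {H : Subgroup P} {W : Submodule K V}
  (B : BlockSystem p ρ H W)

theorem block_le (i : ZMod p) : B.block i ≤ W :=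
  (le_iSup B.block i).trans B.iSup_eq.le

theorem shift_one : B.shift 1 = 0 := by
  have := B.shift_mul 1 (one_mem H) 1 (one_mem H)
  rwa [mul_one, left_eq_add] at this

theorem shift_inv {g : P} (hg : g ∈ H) : B.shift g⁻¹ = -B.shift g := by
  have := B.shift_mul g hg g⁻¹ (inv_mem hg)
  rw [mul_inv_cancel, B.shift_one] at this
  exact (neg_eq_of_add_eq_zero_right this.symm).symm

theorem shift_pow {g : P} (hg : g ∈ H) (n : ℕ) : B.shift (g ^ n) = n * B.shift g := by
  induction n with
  | zero => simp [B.shift_one]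
  | succ n ih =>
    rw [pow_succ, B.shift_mul _ (pow_mem hg n) g hg, ih]
    push_cast
    ring

theorem apply_mem_of_shift_eq_zero {g : P} (hg : g ∈ H) (h0 : B.shift g = 0) {i : ZMod p} {v : V}
    (hv : v ∈ B.block i) : ρ g v ∈ B.block i := by
  simpa [h0] using B.apply_mem g hg i v hv

theorem map_block {g : P} (hg : g ∈ H) (i : ZMod p) :
    (B.block i).map (ρ g) = B.block (i + B.shift g) := by
  apply le_antisymm
  · rintro _ ⟨v, hv, rfl⟩
    exact B.apply_mem g hg i v hv
  · intro v hv
    refine ⟨ρ g⁻¹ v, ?_, ρ.self_inv_apply g v⟩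
    simpa [B.shift_inv hg] using B.apply_mem g⁻¹ (inv_mem hg) _ v hv

variable [Fact p.Prime]

theorem finrank_block {x : P} (hx : x ∈ H) (hx1 : B.shift x = 1) (i : ZMod p) :
    Module.finrank K (B.block i) = Module.finrank K (B.block 0) := by
  have h := B.map_block (pow_mem hx i.val) 0
  rw [B.shift_pow hx, hx1, ZMod.natCast_zmod_val, mul_one, zero_add] at h
  rw [← h, finrank_map_apply]

variable [FiniteDimensional K V]

theorem finrank_eq {x : P} (hx : x ∈ H) (hx1 : B.shift x = 1) :
    Module.finrank K W = p * Module.finrank K (B.block 0) := by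
  have hsum : ∑ i, Module.finrank K (B.block i) = p * Module.finrank K (B.block 0) := by
    simp [B.finrank_block hx hx1, ZMod.card]
  apply le_antisymm
  · rw [← hsum]
    conv_lhs => rw [← B.iSup_eq]
    exact finrank_iSup_le_sum _
  · rw [← hsum]
    exact sum_finrank_le_of_iSupIndep B.indep B.block_le

/-- An element moving the blocks has a large commutator space. -/
theorem finrank_le_of_shift_ne_zero {g : P} (hg : g ∈ H) (h0 : B.shift g ≠ 0) :
    Module.finrank K W ≤ Module.finrank K (commSub ρ g W) + Module.finrank K (B.block 0) := by
  have hle : W ≤ commSub ρ g W ⊔ B.block 0 := by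
    have key : ∀ n : ℕ, B.block (n * B.shift g) ≤ commSub ρ g W ⊔ B.block 0 := by
      intro n
      induction n with
      | zero => simp
      | succ n ih =>
        have h := B.map_block hg (n * B.shift g)
        rw [show (n : ZMod p) * B.shift g + B.shift g = ((n + 1 : ℕ) : ZMod p) * B.shift g by
          push_cast; ring] at h
        rw [← h]
        rintro _ ⟨v, hv, rfl⟩
        rw [← sub_add_cancel (ρ g v) v]
        exact add_mem (Submodule.mem_sup_left (sub_mem_commSub (B.block_le _ hv))) (ih hv)
    conv_lhs => rw [← B.iSup_eq]
    refine iSup_le fun i => ?_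
    have := key (i / B.shift g).val
    rwa [ZMod.natCast_zmod_val, div_mul_cancel₀ _ h0] at this
  exact (Submodule.finrank_mono hle).trans (Submodule.finrank_add_le_finrank_add_finrank _ _)

theorem sum_finrank_commSub_le {g : P} (hg : g ∈ H) (h0 : B.shift g = 0) :
    ∑ i, Module.finrank K (commSub ρ g (B.block i)) ≤ Module.finrank K (commSub ρ g W) :=
  sum_finrank_le_of_iSupIndep
    (B.indep.mono fun _ => commSub_le fun _ hu => B.apply_mem_of_shift_eq_zero hg h0 hu)
    fun i => commSub_mono g (B.block_le i)

end BlockSystem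

/-- The conjugates of the remaining generators by the powers of `x j`. -/
def conjFamily {p : ℕ} {P ι : Type*} [Group P] (x : ι → P) (j : ι) (a : {i // i ≠ j} × ZMod p) :
    P :=
  (x j ^ a.2.val)⁻¹ * x a.1 * x j ^ a.2.val

section ConjFamily

variable {p : ℕ} {K P V ι : Type*} [Field K] [Group P] [AddCommGroup V] [Module K V]
  {ρ : Representation K P V} {W : Submodule K V} {x : ι → P} {j : ι}
  (B : BlockSystem p ρ (Subgroup.closure (Set.range x)) W)

theorem mem_closure_range (i : ι) : x i ∈ Subgroup.closure (Set.range x) :=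
  Subgroup.subset_closure ⟨i, rfl⟩

theorem conjFamily_mem (a : {i // i ≠ j} × ZMod p) :
    conjFamily x j a ∈ Subgroup.closure (Set.range x) :=
  mul_mem (mul_mem (inv_mem (pow_mem (mem_closure_range j) _)) (mem_closure_range _))
    (pow_mem (mem_closure_range j) _)

theorem conjFamily_pow_eq_one (hx : ∀ i, x i ^ p = 1) (a : {i // i ≠ j} × ZMod p) :
    conjFamily x j a ^ p = 1 := by
  have h := conj_pow (i := p) (a := (x j ^ a.2.val)⁻¹) (b := x a.1)
  rw [inv_inv] at h
  rw [conjFamily, h, hx]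
  simp

theorem shift_conjFamily (h0 : ∀ i ≠ j, B.shift (x i) = 0) (a : {i // i ≠ j} × ZMod p) :
    B.shift (conjFamily x j a) = 0 := by
  have hpow := pow_mem (mem_closure_range (x := x) j) a.2.val
  have hxa := mem_closure_range (x := x) a.1
  rw [conjFamily, B.shift_mul _ (mul_mem (inv_mem hpow) hxa) _ hpow,
    B.shift_mul _ (inv_mem hpow) _ hxa, B.shift_inv hpow, h0 _ a.1.2]
  ring

variable [Fact p.Prime]

theorem finrank_commSub_conjFamily (hj : B.shift (x j) = 1) (a : {i // i ≠ j} × ZMod p) :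
    Module.finrank K (commSub ρ (conjFamily x j a) (B.block 0)) =
      Module.finrank K (commSub ρ (x a.1) (B.block a.2)) := by
  rw [conjFamily, commSub_conj, finrank_map_apply,
    B.map_block (pow_mem (mem_closure_range j) _), B.shift_pow (mem_closure_range j), hj,
    ZMod.natCast_zmod_val, mul_one, zero_add]

/-- A consequence of the modular law. -/
theorem le_of_le_sup_of_disjoint {α : Type*} [Lattice α] [IsModularLattice α] [OrderBot α]
    {a b u : α} (hu : u ≤ a) (h : a ≤ u ⊔ b) (hd : Disjoint a b) : a ≤ u :=
  calc a ≤ (u ⊔ b) ⊓ a := le_inf h le_rfl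
    _ = u ⊔ b ⊓ a := sup_inf_assoc_of_le b hu
    _ = u := by rw [inf_comm, hd.eq_bot, sup_bot_eq]

/-- The block stabilizer acts irreducibly on the block. -/
theorem isIrredOn_block [Finite P] [FiniteDimensional K V]
    (h : IsIrredOn ρ (Subgroup.closure (Set.range x)) W)
    (hp : x j ^ p = 1) (hj : B.shift (x j) = 1) (h0 : ∀ i ≠ j, B.shift (x i) = 0) :
    IsIrredOn ρ (Subgroup.closure (Set.range (conjFamily (p := p) x j))) (B.block 0) := by
  have hne : B.block 0 ≠ ⊥ := by
    intro hbot
    have := B.finrank_eq (mem_closure_range j) hj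
    rw [hbot, finrank_bot, mul_zero, Submodule.finrank_eq_zero] at this
    exact h.ne_bot this
  refine ⟨hne, ?_, fun U hU hinv => or_iff_not_imp_left.2 fun hU0 => le_antisymm hU ?_⟩
  · apply invariant_closure
    rintro _ ⟨a, rfl⟩ u hu
    exact B.apply_mem_of_shift_eq_zero (conjFamily_mem a) (shift_conjFamily B h0 a) hu
  have hmapU : ∀ n : ℕ, U.map (ρ (x j ^ n)) ≤ B.block n := by
    intro n
    have := B.map_block (pow_mem (mem_closure_range j) n) 0
    rw [B.shift_pow (mem_closure_range j), hj, mul_one, zero_add] at this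
    rw [← this]
    exact Submodule.map_mono hU
  set S : Submodule K V := ⨆ n : ℕ, U.map (ρ (x j ^ n)) with hS
  have hSW : S ≤ W := iSup_le fun n => (hmapU n).trans (B.block_le _)
  have hSinv : ∀ g ∈ Subgroup.closure (Set.range x), ∀ u ∈ S, ρ g u ∈ S := by
    apply invariant_closure
    rintro _ ⟨i, rfl⟩ u hu
    refine Submodule.iSup_induction _ (motive := fun u => ρ (x i) u ∈ S) hu ?_ ?_ ?_
    · rintro n _ ⟨u', hu', rfl⟩
      by_cases hi : i = j
      · subst hi
        refine Submodule.mem_iSup_of_mem (n + 1) ⟨u', hu', ?_⟩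
        rw [pow_succ', map_mul, Module.End.mul_apply]
      · refine Submodule.mem_iSup_of_mem n ⟨ρ (conjFamily x j (⟨i, hi⟩, (n : ZMod p))) u',
          hinv _ (mem_closure_range _) u' hu', ?_⟩
        rw [← Module.End.mul_apply, ← map_mul, ← Module.End.mul_apply, ← map_mul]
        congr 2
        simp only [conjFamily, ZMod.val_natCast]
        rw [← pow_eq_pow_mod n hp]
        group
    · simp
    · intro a b ha hb
      rw [map_add]
      exact add_mem ha hb
  have hUS : U ≤ S := by
    refine le_trans ?_ (le_iSup _ 0)
    intro u hu
    exact ⟨u, hu, by simp⟩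
  have hSeq : S = W := (h.eq_bot_or_eq S hSW hSinv).resolve_left fun hbot =>
    hU0 (le_bot_iff.1 (hUS.trans hbot.le))
  have hSle : S ≤ U ⊔ ⨆ i ≠ (0 : ZMod p), B.block i := by
    refine iSup_le fun n => ?_
    by_cases hn : (n : ZMod p) = 0
    · refine le_trans ?_ le_sup_left
      obtain ⟨m, rfl⟩ := (ZMod.natCast_eq_zero_iff n p).1 hn
      rw [pow_mul, hp, one_pow, map_one]
      rintro _ ⟨u, hu, rfl⟩
      exact hu
    · have hblock : B.block n ≤ ⨆ i ≠ (0 : ZMod p), B.block i :=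
        le_iSup₂ (f := fun (i : ZMod p) (_ : i ≠ 0) => B.block i) (n : ZMod p) hn
      exact ((hmapU n).trans hblock).trans le_sup_right
  have hdis : Disjoint (B.block 0) (⨆ i ≠ (0 : ZMod p), B.block i) := B.indep 0
  have hle : B.block 0 ≤ U ⊔ ⨆ i ≠ (0 : ZMod p), B.block i :=
    (B.block_le 0).trans (hSeq.ge.trans hSle)
  exact le_of_le_sup_of_disjoint hU hle hdis

end ConjFamily

/-- An injective character of `ZMod p` takes every `p`-th root of unity as a value. -/
theorem exists_addChar_eq {p : ℕ} [Fact p.Prime] {K : Type*} [Field K] {ψ : AddChar (ZMod p) K}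
    (hψ : Function.Injective ψ) {η : K} (hη : η ^ p = 1) : ∃ u, ψ u = η := by
  have hpow : ψ 1 ^ p = 1 := by
    rw [← AddChar.map_nsmul_eq_pow, nsmul_one, CharP.cast_eq_zero, AddChar.map_zero_eq_one]
  have hne : ψ 1 ≠ 1 := fun h =>
    one_ne_zero (hψ (h.trans (AddChar.map_zero_eq_one ψ).symm))
  have hprim : IsPrimitiveRoot (ψ 1) p := IsPrimitiveRoot.iff_orderOf.2 (orderOf_eq_prime hpow hne)
  obtain ⟨i, -, hi⟩ := hprim.eq_pow_of_pow_eq_one hη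
  exact ⟨i, by rw [← hi, ← AddChar.map_nsmul_eq_pow, nsmul_one]⟩

/-- An irreducible representation on which the group acts as an abelian group is a line. -/
theorem IsIrredOn.finrank_eq_one {K P V : Type*} [Field K] [IsAlgClosed K] [Group P]
    [AddCommGroup V] [Module K V] [FiniteDimensional K V] {ρ : Representation K P V}
    {H : Subgroup P} {W : Submodule K V} (h : IsIrredOn ρ H W) (hc : CommutesOn ρ H W) :
    Module.finrank K W = 1 := by
  obtain ⟨w, hw, hw0⟩ := Submodule.exists_mem_ne_zero_of_ne_bot h.ne_bot
  have hspan : K ∙ w = W := by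
    refine (h.eq_bot_or_eq _ ((Submodule.span_singleton_le_iff_mem _ _).2 hw) ?_).resolve_left
      fun hbot => hw0 (Submodule.span_singleton_eq_bot.1 hbot)
    intro g hg u hu
    obtain ⟨a, rfl⟩ := Submodule.mem_span_singleton.1 hu
    obtain ⟨μ, hμ⟩ := h.exists_eq_smul ((ρ g).restrict (h.apply_mem g hg)) fun k hk v => by
      simpa using hc g hg k hk v v.2
    have hgw : ρ g w = μ • w := by
      simpa using congrArg Subtype.val (LinearMap.congr_fun hμ ⟨w, hw⟩)
    rw [map_smul, hgw]
    exact Submodule.smul_mem _ _ (Submodule.smul_mem _ _ (Submodule.mem_span_singleton_self w))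
  rw [← hspan, finrank_span_singleton hw0]

section Cases

variable {p : ℕ} [Fact p.Prime] {K P V ι : Type*} [Field K] [Group P] [AddCommGroup V] [Module K V]
  [FiniteDimensional K V] [Fintype ι] {ρ : Representation K P V} {W : Submodule K V} {x : ι → P}
  {j : ι} (B : BlockSystem p ρ (Subgroup.closure (Set.range x)) W)

theorem hasSection_of_two_shifts (hP : IsPGroup p P)
    (h : IsIrredOn ρ (Subgroup.closure (Set.range x)) W) (hx : ∀ i, x i ^ p = 1)
    (hsum : ∑ i, Module.finrank K (commSub ρ (x i) W) ≤ Module.finrank K W)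
    (hne : ¬ CommutesOn ρ (Subgroup.closure (Set.range x)) W)
    (hj : B.shift (x j) = 1) {i : ι} (hij : i ≠ j) (hi : B.shift (x i) ≠ 0) :
    HasSectionIsomorphicTo P (WreathZpZp p) := by
  classical
  have hW : Module.finrank K W ≠ 0 := fun h0 => h.ne_bot (Submodule.finrank_eq_zero.1 h0)
  have hd := B.finrank_eq (mem_closure_range j) hj
  have h1 := B.finrank_le_of_shift_ne_zero (mem_closure_range i) hi
  have h2 := B.finrank_le_of_shift_ne_zero (mem_closure_range j) (hj ▸ one_ne_zero)
  have hpair : ∑ k ∈ {i, j}, Module.finrank K (commSub ρ (x k) W) ≤ Module.finrank K W :=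
    (Finset.sum_le_univ_sum_of_nonneg fun _ => Nat.zero_le _).trans hsum
  rw [Finset.sum_pair hij] at hpair
  have hd0 : 0 < Module.finrank K (B.block 0) := Nat.pos_of_ne_zero fun h0 => hW (by simp [hd, h0])
  obtain rfl : p = 2 := by
    refine le_antisymm ?_ (Fact.out : p.Prime).two_le
    exact Nat.le_of_mul_le_mul_right (by omega : p * _ ≤ 2 * _) hd0
  have htriv : ∀ k, k ≠ i → k ≠ j → ∀ v ∈ W, ρ (x k) v = v := by
    intro k hki hkj v hv
    refine apply_eq_of_finrank_commSub_eq_zero ?_ hv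
    have htriple : ∑ k ∈ {k, i, j}, Module.finrank K (commSub ρ (x k) W) ≤ Module.finrank K W :=
      (Finset.sum_le_univ_sum_of_nonneg fun _ => Nat.zero_le _).trans hsum
    rw [Finset.sum_insert (by simp [hki, hkj]), Finset.sum_pair hij] at htriple
    omega
  refine hasSection_of_involutions hP (a := x i) (b := x j) (by rw [← sq, hx]) (by rw [← sq, hx])
    fun hcomm => hne (commute_closure h.apply_mem ?_)
  have hmem : ∀ k, ∀ v ∈ W, ρ (x k) v ∈ W := fun k => h.apply_mem _ (mem_closure_range k)
  rintro _ ⟨k, rfl⟩ _ ⟨l, rfl⟩ v hv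
  by_cases hk : k ≠ i ∧ k ≠ j
  · simp [htriv k hk.1 hk.2, hmem, hv]
  by_cases hl : l ≠ i ∧ l ≠ j
  · simp [htriv l hl.1 hl.2, hmem, hv]
  obtain rfl | rfl : k = i ∨ k = j := by tauto
  · obtain rfl | rfl : l = k ∨ l = j := by tauto
    · rfl
    · rw [hcomm]
  · obtain rfl | rfl : l = i ∨ l = k := by tauto
    · rw [hcomm]
    · rfl

theorem sum_finrank_commSub_blocks_le [DecidableEq ι]
    (hsum : ∑ i, Module.finrank K (commSub ρ (x i) W) ≤ Module.finrank K W)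
    (hj : B.shift (x j) = 1) (h0 : ∀ i ≠ j, B.shift (x i) = 0) :
    ∑ a : {i // i ≠ j} × ZMod p, Module.finrank K (commSub ρ (x a.1) (B.block a.2)) ≤
      Module.finrank K (B.block 0) := by
  have h1 := B.finrank_le_of_shift_ne_zero (mem_closure_range j) (hj ▸ one_ne_zero)
  have h2 : ∑ i, Module.finrank K (commSub ρ (x i) W) =
      Module.finrank K (commSub ρ (x j) W) +
        ∑ i : {i // i ≠ j}, Module.finrank K (commSub ρ (x i) W) :=
    Fintype.sum_eq_add_sum_subtype_ne _ j
  have h3 : ∀ i : {i // i ≠ j}, ∑ t, Module.finrank K (commSub ρ (x i) (B.block t)) ≤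
      Module.finrank K (commSub ρ (x i) W) := fun i =>
    B.sum_finrank_commSub_le (mem_closure_range i.1) (h0 i i.2)
  have h4 := Finset.sum_le_sum fun i (_ : i ∈ Finset.univ) => h3 i
  rw [Fintype.sum_prod_type]
  dsimp only
  omega

theorem hasSection_of_finrank_block_eq_one [DecidableEq ι] {ψ : AddChar (ZMod p) K}
    (hψ : Function.Injective ψ) (hx : ∀ i, x i ^ p = 1) (hj : B.shift (x j) = 1)
    (h0 : ∀ i ≠ j, B.shift (x i) = 0) (hd : Module.finrank K (B.block 0) = 1)
    (hsum : ∑ a : {i // i ≠ j} × ZMod p, Module.finrank K (commSub ρ (x a.1) (B.block a.2)) ≤ 1)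
    {a : {i // i ≠ j} × ZMod p}
    (ha : Module.finrank K (commSub ρ (x a.1) (B.block a.2)) ≠ 0) :
    HasSectionIsomorphicTo P (WreathZpZp p) := by
  have hmem := mem_closure_range (x := x)
  obtain ⟨w₀, hw₀, hne⟩ := Submodule.exists_mem_ne_zero_of_ne_bot
    (show B.block 0 ≠ ⊥ from fun hb => zero_ne_one (by rwa [hb, finrank_bot] at hd))
  let w : ZMod p → V := fun t => ρ (x j ^ t.val) w₀
  have hwmem : ∀ t, w t ∈ B.block t := fun t => by
    have := B.apply_mem _ (pow_mem (hmem j) t.val) 0 w₀ hw₀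
    rwa [B.shift_pow (hmem j), hj, ZMod.natCast_zmod_val, mul_one, zero_add] at this
  have hw0 : ∀ t, w t ≠ 0 := fun t ht =>
    hne ((ρ.apply_bijective (x j ^ t.val)).1 (by rw [map_zero]; exact ht))
  have hli : LinearIndependent K w := B.indep.linearIndependent _ hwmem hw0
  have hline : ∀ t {v}, v ∈ B.block t → ∃ b : K, b • w t = v := fun t v hv => by
    obtain ⟨b, hb⟩ := (finrank_eq_one_iff_of_nonzero' (⟨w t, hwmem _⟩ : B.block t)
      fun h => hw0 _ (congrArg Subtype.val h)).1 ((B.finrank_block (hmem j) hj _).trans hd) ⟨v, hv⟩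
    exact ⟨b, congrArg Subtype.val hb⟩
  obtain ⟨η, hη⟩ := hline a.2
    (B.apply_mem_of_shift_eq_zero (hmem a.1) (h0 _ a.1.2) (hwmem a.2))
  replace hη := hη.symm
  have hηpow : ∀ n : ℕ, ρ (x a.1 ^ n) (w a.2) = η ^ n • w a.2 := by
    intro n
    induction n with
    | zero => simp
    | succ n ih =>
      rw [pow_succ, map_mul, Module.End.mul_apply, hη, map_smul, ih, smul_smul, pow_succ']
  have hηp : η ^ p = 1 := by
    have := hηpow p
    rw [hx, map_one, Module.End.one_apply] at this
    exact smul_left_injective K (hw0 a.2) (by simpa using this.symm)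
  obtain ⟨u, rfl⟩ := exists_addChar_eq hψ hηp
  have hshift : ∀ t, ρ (x j) (w t) = w (t + 1) := fun t => by
    change ρ (x j) (ρ (x j ^ t.val) w₀) = ρ (x j ^ (t + 1).val) w₀
    rw [← Module.End.mul_apply, ← map_mul, ← pow_succ', pow_eq_pow_mod _ (hx j), ZMod.val_add,
      ZMod.val_one, ← ZMod.val_one p]
  have hfix : ∀ t ≠ a.2, ρ (x a.1) (w t) = w t := fun t ht => by
    refine apply_eq_of_finrank_commSub_eq_zero ?_ (hwmem t)
    have hpair := (Finset.sum_le_univ_sum_of_nonneg (s := {a, (a.1, t)})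
      fun _ => Nat.zero_le _).trans hsum
    rw [Finset.sum_pair fun h => ht (congrArg Prod.snd h).symm] at hpair
    dsimp only at hpair
    omega
  have hu : u ≠ 0 := by
    rintro rfl
    rw [AddChar.map_zero_eq_one, one_smul] at hη
    refine ha (Submodule.finrank_eq_zero.2 (le_bot_iff.1 ?_))
    rintro _ ⟨v, hv, rfl⟩
    obtain ⟨b, rfl⟩ := hline a.2 hv
    simp [hη]
  refine hasSection_of_monomial ρ ψ hψ w hli {x j, x a.1} ?_ (Set.mem_insert _ _) hshift
    (Set.mem_insert_of_mem _ rfl) hu hη hfix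
  rintro _ (rfl | rfl)
  · exact ⟨0, 1, by simpa using hshift⟩
  · refine ⟨Pi.single a.2 u, 0, fun t => ?_⟩
    by_cases ht : t = a.2
    · subst ht
      simpa using hη
    · simpa [ht] using hfix t ht

end Cases

/-- The theorem for irreducible representations over an algebraically closed field. -/
theorem hasSection_of_isIrredOn {p : ℕ} [Fact p.Prime] {K P V : Type*} [Field K] [IsAlgClosed K]
    [Group P] [Finite P] (hP : IsPGroup p P) [AddCommGroup V] [Module K V] [FiniteDimensional K V]
    {ρ : Representation K P V} {ι : Type} [Fintype ι] {x : ι → P} {W : Submodule K V}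
    (h : IsIrredOn ρ (Subgroup.closure (Set.range x)) W) (hx : ∀ i, x i ^ p = 1)
    (hsum : ∑ i, Module.finrank K (commSub ρ (x i) W) ≤ Module.finrank K W)
    (hne : ¬ CommutesOn ρ (Subgroup.closure (Set.range x)) W) :
    HasSectionIsomorphicTo P (WreathZpZp p) := by
  classical
  induction hn : Module.finrank K W using Nat.strong_induction_on generalizing ι x W with
  | _ n ih =>
  subst hn
  obtain ⟨ψ, B, j, hψ, hj⟩ := h.exists_blockSystem hP hne
  by_cases h0 : ∃ i ≠ j, B.shift (x i) ≠ 0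
  · obtain ⟨i, hij, hi⟩ := h0
    exact hasSection_of_two_shifts B hP h hx hsum hne hj hij hi
  push Not at h0
  have hW : Module.finrank K W ≠ 0 := fun h0 => h.ne_bot (Submodule.finrank_eq_zero.1 h0)
  have hd := B.finrank_eq (mem_closure_range j) hj
  have hd0 : 0 < Module.finrank K (B.block 0) := Nat.pos_of_ne_zero fun h0 => hW (by simp [hd, h0])
  have hlt : Module.finrank K (B.block 0) < Module.finrank K W := by
    rw [hd]
    exact lt_mul_of_one_lt_left hd0 (Fact.out : p.Prime).one_lt
  have hirr := isIrredOn_block B h (hx j) hj h0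
  have hsum' := sum_finrank_commSub_blocks_le B hsum hj h0
  by_cases hc : CommutesOn ρ (Subgroup.closure (Set.range (conjFamily (p := p) x j))) (B.block 0)
  · have hd1 := hirr.finrank_eq_one hc
    by_cases hall : ∀ a : {i // i ≠ j} × ZMod p,
        Module.finrank K (commSub ρ (x a.1) (B.block a.2)) = 0
    · have htriv : ∀ i ≠ j, ∀ v ∈ W, ρ (x i) v = v := by
        intro i hi v hv
        rw [← B.iSup_eq] at hv
        refine Submodule.iSup_induction _ (motive := fun v => ρ (x i) v = v) hv ?_ (map_zero _) ?_
        · intro t v hv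
          exact apply_eq_of_finrank_commSub_eq_zero (hall (⟨i, hi⟩, t)) hv
        · intro a b ha hb
          rw [map_add, ha, hb]
      refine absurd (commute_closure h.apply_mem ?_) hne
      have hmem : ∀ k, ∀ v ∈ W, ρ (x k) v ∈ W := fun k => h.apply_mem _ (mem_closure_range k)
      rintro _ ⟨k, rfl⟩ _ ⟨l, rfl⟩ v hv
      by_cases hk : k = j
      · by_cases hl : l = j
        · rw [hk, hl]
        · simp [htriv l hl, hmem, hv]
      · simp [htriv k hk, hmem, hv]
    · push Not at hall
      obtain ⟨a, ha⟩ := hall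
      exact hasSection_of_finrank_block_eq_one B hψ hx hj h0 hd1 (hsum'.trans hd1.le) ha
  · refine ih _ hlt hirr (conjFamily_pow_eq_one hx) ?_ hc rfl
    simpa only [finrank_commSub_conjFamily B hj] using hsum'

section Summands

variable {K P V ι : Type*} [Field K] [Group P] [AddCommGroup V] [Module K V]
  {ρ : Representation K P V} {U U' W : Submodule K V} {x : ι → P}

theorem le_iSup_commSub_of_isCompl (hU : ∀ g, ∀ u ∈ U, ρ g u ∈ U) (hU' : ∀ g, ∀ u ∈ U', ρ g u ∈ U')
    (hsup : U ⊔ U' = W) (hdis : Disjoint U U') (hspan : W ≤ ⨆ i, commSub ρ (x i) W) :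
    U ≤ ⨆ i, commSub ρ (x i) U := by
  have hle : ⨆ i, commSub ρ (x i) U ≤ U := iSup_le fun i => commSub_le (hU (x i))
  refine le_of_le_sup_of_disjoint (b := U') hle ?_ hdis
  refine (le_sup_left.trans (hsup.le.trans hspan)).trans (iSup_le fun i => ?_)
  rw [← hsup, commSub, Submodule.map_sup]
  exact sup_le_sup (le_iSup (fun i => commSub ρ (x i) U) i) (commSub_le (hU' (x i)))

theorem finrank_commSub_add [FiniteDimensional K V] (g : P) (hU : ∀ u ∈ U, ρ g u ∈ U)
    (hU' : ∀ u ∈ U', ρ g u ∈ U') (hsup : U ⊔ U' = W) (hdis : Disjoint U U') :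
    Module.finrank K (commSub ρ g U) + Module.finrank K (commSub ρ g U') =
      Module.finrank K (commSub ρ g W) := by
  have h := Submodule.finrank_sup_add_finrank_inf_eq (commSub ρ g U) (commSub ρ g U')
  rw [(hdis.mono (commSub_le hU) (commSub_le hU')).eq_bot, finrank_bot, add_zero] at h
  rw [← h, ← hsup, commSub, commSub, commSub, Submodule.map_sup]

theorem exists_invariant_compl [Finite P] [NeZero (Nat.card P : K)]
    (hU : ∀ g, ∀ u ∈ U, ρ g u ∈ U) (hW : ∀ g, ∀ w ∈ W, ρ g w ∈ W) (hUW : U ≤ W) :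
    ∃ U' : Submodule K V, (∀ g, ∀ u ∈ U', ρ g u ∈ U') ∧ U ⊔ U' = W ∧ Disjoint U U' := by
  obtain ⟨C, hC⟩ := exists_isCompl (⟨U, fun g u hu => hU g u hu⟩ : Subrepresentation ρ)
  have hsup : U ⊔ C.toSubmodule = ⊤ :=
    congrArg Subrepresentation.toSubmodule hC.codisjoint.eq_top
  have hinf : U ⊓ C.toSubmodule = ⊥ :=
    congrArg Subrepresentation.toSubmodule hC.disjoint.eq_bot
  refine ⟨C.toSubmodule ⊓ W, fun g u hu => ⟨C.apply_mem_toSubmodule g hu.1, hW g u hu.2⟩, ?_, ?_⟩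
  · rw [← sup_inf_assoc_of_le _ hUW, hsup, top_inf_eq]
  · exact (disjoint_iff.2 hinf).mono_right inf_le_left

end Summands

/-- The theorem for semisimple representations over an algebraically closed field. -/
theorem hasSection_of_le_iSup_commSub {p : ℕ} [Fact p.Prime] {K P V : Type*} [Field K]
    [IsAlgClosed K] [Group P] [Finite P] [NeZero (Nat.card P : K)] (hP : IsPGroup p P)
    [AddCommGroup V] [Module K V] [FiniteDimensional K V] {ρ : Representation K P V} {ι : Type}
    [Fintype ι] {x : ι → P} (hgen : Subgroup.closure (Set.range x) = ⊤) (hx : ∀ i, x i ^ p = 1)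
    {W : Submodule K V} (hW : ∀ g, ∀ w ∈ W, ρ g w ∈ W) (hspan : W ≤ ⨆ i, commSub ρ (x i) W)
    (hsum : ∑ i, Module.finrank K (commSub ρ (x i) W) ≤ Module.finrank K W)
    (hne : ¬ CommutesOn ρ ⊤ W) : HasSectionIsomorphicTo P (WreathZpZp p) := by
  induction hn : Module.finrank K W using Nat.strong_induction_on generalizing W with
  | _ n ih =>
  subst hn
  by_cases hirr : IsIrredOn ρ ⊤ W
  · rw [← hgen] at hirr hne
    exact hasSection_of_isIrredOn hP hirr hx hsum hne
  have hW0 : W ≠ ⊥ := by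
    rintro rfl
    refine hne fun g _ h _ w hw => ?_
    rw [(Submodule.mem_bot K).1 hw, map_zero, map_zero]
  obtain ⟨U, hUW, hU, hU0, hU1⟩ : ∃ U ≤ W, (∀ g, ∀ u ∈ U, ρ g u ∈ U) ∧ U ≠ ⊥ ∧ U ≠ W := by
    by_contra! hall
    exact hirr ⟨hW0, fun g _ => hW g, fun U hUW hU =>
      or_iff_not_imp_left.2 (hall U hUW fun g => hU g (Subgroup.mem_top g))⟩
  obtain ⟨U', hU', hsup, hdis⟩ := exists_invariant_compl hU hW hUW
  have hspanU := le_iSup_commSub_of_isCompl hU hU' hsup hdis hspan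
  have hspanU' := le_iSup_commSub_of_isCompl hU' hU (sup_comm U U' ▸ hsup) hdis.symm hspan
  have h1 := (Submodule.finrank_mono hspanU).trans (finrank_iSup_le_sum _)
  have h2 := (Submodule.finrank_mono hspanU').trans (finrank_iSup_le_sum _)
  have h3 : ∑ i, Module.finrank K (commSub ρ (x i) U) + ∑ i, Module.finrank K (commSub ρ (x i) U') =
      ∑ i, Module.finrank K (commSub ρ (x i) W) := by
    rw [← Finset.sum_add_distrib]
    exact Finset.sum_congr rfl fun i _ => finrank_commSub_add _ (hU _) (hU' _) hsup hdis
  have h4 := Submodule.finrank_sup_add_finrank_inf_eq U U'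
  rw [hdis.eq_bot, finrank_bot, hsup, add_zero] at h4
  have hlt : Module.finrank K U < Module.finrank K W :=
    Submodule.finrank_lt_finrank_of_lt (lt_of_le_of_ne hUW hU1)
  have hpos : Module.finrank K U ≠ 0 := fun h0 => hU0 (Submodule.finrank_eq_zero.1 h0)
  by_cases hcU : CommutesOn ρ ⊤ U
  · refine ih _ (by omega) hU' hspanU' (by omega) (fun hcU' => hne ?_) rfl
    intro g hg h hh w hw
    rw [← hsup] at hw
    obtain ⟨u, hu, u', hu', rfl⟩ := Submodule.mem_sup.1 hw
    rw [map_add, map_add, hcU g hg h hh u hu, hcU' g hg h hh u' hu']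
  · exact ih _ hlt hU hspanU (by omega) hcU rfl

section BaseChange

open TensorProduct

variable {k V : Type*} (K : Type*) [Field k] [Field K] [Algebra k K] [AddCommGroup V] [Module k V]

theorem finrank_range_baseChange_le [FiniteDimensional k V] (f : Module.End k V) :
    Module.finrank K (LinearMap.range (f.baseChange K)) ≤ Module.finrank k (LinearMap.range f) := by
  have hf : f.baseChange K =
      (LinearMap.range f).subtype.baseChange K ∘ₗ f.rangeRestrict.baseChange K := by
    rw [← LinearMap.baseChange_comp, LinearMap.subtype_comp_codRestrict]
  rw [hf, ← Module.finrank_baseChange (R := K) (M' := LinearMap.range f)]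
  exact (Submodule.finrank_mono (LinearMap.range_comp_le_range _ _)).trans
    (LinearMap.finrank_range_le _)

theorem iSup_range_baseChange_eq_top {ι : Type*} (f : ι → Module.End k V)
    (hf : ⨆ i, LinearMap.range (f i) = ⊤) : ⨆ i, LinearMap.range ((f i).baseChange K) = ⊤ := by
  refine eq_top_iff.2 fun z _ => ?_
  induction z with
  | zero => exact zero_mem _
  | add a b ha hb => exact add_mem (ha trivial) (hb trivial)
  | tmul a v =>
    have hv : v ∈ ⨆ i, LinearMap.range (f i) := hf ▸ Submodule.mem_top
    refine Submodule.iSup_induction _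
      (motive := fun v => a ⊗ₜ[k] v ∈ ⨆ i, LinearMap.range ((f i).baseChange K)) hv ?_ ?_ ?_
    · rintro i _ ⟨u, rfl⟩
      exact Submodule.mem_iSup_of_mem i ⟨a ⊗ₜ u, by simp⟩
    · simp
    · intro u v hu hv
      rw [tmul_add]
      exact add_mem hu hv

/-- Extension of scalars of a representation. -/
noncomputable def Representation.extendScalars {P : Type*} [Monoid P] (ρ : Representation k P V) :
    Representation K P (K ⊗[k] V) :=
  (Module.End.baseChangeHom k K V : Module.End k V →* Module.End K (K ⊗[k] V)).comp ρ

theorem Representation.extendScalars_apply {P : Type*} [Monoid P] (ρ : Representation k P V)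
    (g : P) : ρ.extendScalars K g = (ρ g).baseChange K := rfl

theorem commSub_extendScalars_top {P : Type*} [Group P] (ρ : Representation k P V) (g : P) :
    commSub (ρ.extendScalars K) g ⊤ =
      LinearMap.range ((ρ g - LinearMap.id).baseChange K) := by
  rw [commSub, Submodule.map_top, LinearMap.baseChange_sub, LinearMap.baseChange_id,
    Representation.extendScalars_apply]

theorem eq_of_extendScalars_eq {P : Type*} [Monoid P] (ρ : Representation k P V) {g h : P}
    (e : ρ.extendScalars K g = ρ.extendScalars K h) : ρ g = ρ h :=
  LinearMap.baseChangeHom_injective k V K e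

end BaseChange

/-- A representation under which the group acts as an abelian group is trivial on the commutator
subgroup. -/
theorem apply_eq_id_of_mem_commutator {k P V : Type*} [Field k] [Group P] [AddCommGroup V]
    [Module k V] {ρ : Representation k P V} (h : ∀ a b, ρ (a * b) = ρ (b * a)) {z : P}
    (hz : z ∈ commutator P) : ρ z = LinearMap.id := by
  rw [commutator_eq_closure] at hz
  induction hz using Subgroup.closure_induction with
  | mem z hz =>
    obtain ⟨a, b, rfl⟩ := hz
    rw [commutatorElement_def, mul_assoc, map_mul, ← mul_inv_rev, h a b, ← map_mul, mul_inv_cancel,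
      map_one]
    rfl
  | one => exact map_one ρ
  | mul a b _ _ ha hb =>
    rw [map_mul, ha, hb]
    rfl
  | inv a _ ha =>
    have e : ρ a * ρ a⁻¹ = 1 := by rw [← map_mul, mul_inv_cancel, map_one]
    rw [ha] at e
    exact e

/-- If a finite `p`-group `P` (with `char k ≠ p`) acts irreducibly and nontrivially on
`⁅P,P⁆` on a `k`-vector space `V`, is generated by elements `x₁, …, x_s` of order `p`,
and `V = ⨁ᵢ [xᵢ, V]`, then `P` has a section isomorphic to `Z_p ≀ Z_p`. -/
theorem statement_8 {p : ℕ} [Fact p.Prime]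
    {k : Type*} [Field k] (hchar : ringChar k ≠ p)
    {P : Type*} [Group P] [Fintype P] (hP : IsPGroup p P)
    {V : Type*} [AddCommGroup V] [Module k V] [FiniteDimensional k V]
    (ρ : Representation k P V)
    (hV : Nontrivial V)
    (hirr : ∀ U : Submodule k V, (∀ g : P, ∀ v ∈ U, ρ g v ∈ U) → U = ⊥ ∨ U = ⊤)
    (hcomm : ¬ ∀ z ∈ commutator P, ρ z = LinearMap.id)
    {s : ℕ} (x : Fin s → P)
    (hgen : Subgroup.closure (Set.range x) = ⊤)
    (hord : ∀ j : Fin s, orderOf (x j) = p)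
    (hsum : DirectSum.IsInternal
      (fun i : Fin s => LinearMap.range (ρ (x i) - LinearMap.id))) :
    HasSectionIsomorphicTo P (WreathZpZp p) := by
  have hspan := hsum.submodule_iSup_eq_top
  have hdim : ∑ i, Module.finrank k (LinearMap.range (ρ (x i) - LinearMap.id)) ≤
      Module.finrank k V := by
    rw [← finrank_top k V]
    exact sum_finrank_le_of_iSupIndep hsum.submodule_iSupIndep fun _ => le_top
  have hp : (p : k) ≠ 0 := fun h0 =>
    ((Nat.dvd_prime Fact.out).1 (ringChar.dvd h0)).elim CharP.ringChar_ne_one hchar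
  let K := AlgebraicClosure k
  have : NeZero (Nat.card P : K) := by
    obtain ⟨n, hn⟩ := hP.exists_card_eq
    refine ⟨?_⟩
    rw [hn, Nat.cast_pow, ← map_natCast (algebraMap k K)]
    exact pow_ne_zero n ((map_ne_zero _).2 hp)
  refine hasSection_of_le_iSup_commSub hP (ρ := ρ.extendScalars K) hgen
    (fun i => hord i ▸ pow_orderOf_eq_one (x i)) (W := ⊤) (fun _ _ _ => Submodule.mem_top) ?_ ?_
    fun hc => hcomm fun z => apply_eq_id_of_mem_commutator fun a b => ?_
  · simp only [commSub_extendScalars_top]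
    exact (iSup_range_baseChange_eq_top K _ hspan).ge
  · rw [finrank_top, Module.finrank_baseChange]
    refine (Finset.sum_le_sum fun i _ => ?_).trans hdim
    rw [commSub_extendScalars_top]
    exact finrank_range_baseChange_le K _
  · exact eq_of_extendScalars_eq K ρ (LinearMap.ext fun v =>
      hc a (Subgroup.mem_top a) b (Subgroup.mem_top b) v Submodule.mem_top)
end

section
/- Let F be a finite field of odd characteristic with q = |F| elements, let n ≥ 3, and let V be an n-dimensional F-vector space equipped with a nondegenerate symmetric bilinear form B. Let G be the group of isometries of B (invertible linear maps f of V with B(f v, f w) = B(v,w) for all v, w ∈ V). Let x, y ∈ G be reflections, i.e. x² = 1 and the fixed space of x has dimension n−1, and likewise for y, and assume x and y are not conjugate in G. Then the subgroup ⟨x, g⁻¹yg⟩ is a 2-group for all g ∈ G if and only if q = 3. -/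
/-- The fixed-point subspace of a linear automorphism `f` of `V`. -/
def fixedSpace {F V : Type*} [Field F] [AddCommGroup V] [Module F V]
    (f : V ≃ₗ[F] V) : Submodule F V :=
  LinearMap.ker (f.toLinearMap - LinearMap.id)

/-- The group of isometries of a bilinear form `B` on `V`: all invertible linear maps
`f : V → V` with `B (f v) (f w) = B v w` for all `v, w`. -/
def isometryGroup {F V : Type*} [Field F] [AddCommGroup V] [Module F V]
    (B : V →ₗ[F] V →ₗ[F] F) : Subgroup (V ≃ₗ[F] V) where
  carrier := {f | ∀ v w : V, B (f v) (f w) = B v w}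
  one_mem' := fun _ _ => rfl
  mul_mem' := by
    intro a b ha hb v w
    show B (a (b v)) (a (b w)) = B v w
    rw [ha, hb]
  inv_mem' := by
    intro a ha v w
    show B (a.symm v) (a.symm w) = B v w
    rw [← ha (a.symm v) (a.symm w), a.apply_symm_apply, a.apply_symm_apply]

/-- `x` acts as the reflection in the hyperplane orthogonal to `a`. -/
def IsReflectionAlong {F V : Type*} [Field F] [AddCommGroup V] [Module F V]
    (B : V →ₗ[F] V →ₗ[F] F) (a : V) (x : V ≃ₗ[F] V) : Prop :=
  ∀ v, x v = v - (2 * B v a / B a a) • a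

section Orthogonal

variable {F V : Type*} [Field F] [AddCommGroup V] [Module F V] {B : V →ₗ[F] V →ₗ[F] F}

theorem exists_isReflectionAlong (hsymm : ∀ v w : V, B v w = B w v) {a : V} (ha : B a a ≠ 0) :
    ∃ x : isometryGroup B, IsReflectionAlong B a (x : V ≃ₗ[F] V) := by
  let f : V →ₗ[F] V := LinearMap.id - (2 / B a a) • (B a).smulRight a
  have hf : ∀ v, f v = v - (2 * B v a / B a a) • a := by
    intro v
    simp only [f, LinearMap.sub_apply, LinearMap.id_apply, LinearMap.smul_apply,
      LinearMap.smulRight_apply, smul_smul, hsymm a v]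
    ring_nf
  have hinv : Function.Involutive f := by
    intro v
    rw [hf (f v), hf v]
    simp only [map_sub, map_smul, LinearMap.sub_apply, LinearMap.smul_apply, smul_eq_mul]
    match_scalars
    · ring
    · field_simp
      ring
  refine ⟨⟨LinearEquiv.ofInvolutive f hinv, fun v w => ?_⟩, hf⟩
  change B (f v) (f w) = B v w
  rw [hf, hf]
  simp only [map_sub, map_smul, LinearMap.sub_apply, LinearMap.smul_apply, smul_eq_mul,
    hsymm a w]
  field_simp
  ring

theorem IsReflectionAlong.conj {b c : V} (hbc : B c c = B b b) {y g : isometryGroup B}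
    (hy : IsReflectionAlong B b (y : V ≃ₗ[F] V)) {ε : F} (hε : ε * ε = 1)
    (hg : (g : V ≃ₗ[F] V) c = ε • b) :
    IsReflectionAlong B c ((g⁻¹ * y * g : isometryGroup B) : V ≃ₗ[F] V) := by
  refine fun v => (g : V ≃ₗ[F] V).injective ?_
  have hgB : ∀ v w, B ((g : V ≃ₗ[F] V) v) ((g : V ≃ₗ[F] V) w) = B v w := g.2
  have hL : (g : V ≃ₗ[F] V) (((g⁻¹ * y * g : isometryGroup B) : V ≃ₗ[F] V) v) =
      (y : V ≃ₗ[F] V) ((g : V ≃ₗ[F] V) v) :=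
    (g : V ≃ₗ[F] V).apply_symm_apply _
  have hv : B v c = ε * B ((g : V ≃ₗ[F] V) v) b := by
    rw [← hgB v c, hg, map_smul, smul_eq_mul]
  rw [hL, hy, map_sub, map_smul, hg, hbc, hv, smul_smul]
  congr 2
  linear_combination (-(2 * B ((g : V ≃ₗ[F] V) v) b / B b b)) * hε

theorem exists_isReflectionAlong_conj (h2 : (2 : F) ≠ 0) (hsymm : ∀ v w : V, B v w = B w v)
    {b c : V} (hb : B b b ≠ 0) (hbc : B c c = B b b) {y : isometryGroup B}
    (hy : IsReflectionAlong B b (y : V ≃ₗ[F] V)) :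
    ∃ g : isometryGroup B, IsReflectionAlong B c ((g⁻¹ * y * g : isometryGroup B) : V ≃ₗ[F] V) := by
  obtain ⟨g, ε, hε, hg⟩ : ∃ (g : isometryGroup B) (ε : F), ε * ε = 1 ∧
      (g : V ≃ₗ[F] V) c = ε • b := by
    by_cases h : B (c - b) (c - b) = 0
    · have h' : B (c + b) (c + b) = 4 * B b b := by
        simp only [map_sub, map_add, LinearMap.sub_apply, LinearMap.add_apply] at h ⊢
        linear_combination -h + 2 * hbc
      have hne : B (c + b) (c + b) ≠ 0 := by
        rw [h', show (4 : F) = 2 * 2 by norm_num]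
        exact mul_ne_zero (mul_ne_zero h2 h2) hb
      obtain ⟨g, hg⟩ := exists_isReflectionAlong hsymm hne
      refine ⟨g, -1, by ring, ?_⟩
      have hcoef : 2 * B c (c + b) / B (c + b) (c + b) = 1 := by
        rw [div_eq_one_iff_eq hne]
        simp only [map_add, LinearMap.add_apply]
        linear_combination hbc + hsymm c b
      rw [hg c, hcoef]
      module
    · obtain ⟨g, hg⟩ := exists_isReflectionAlong hsymm h
      refine ⟨g, 1, by ring, ?_⟩
      have hcoef : 2 * B c (c - b) / B (c - b) (c - b) = 1 := by
        rw [div_eq_one_iff_eq h]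
        simp only [map_sub, LinearMap.sub_apply]
        linear_combination hbc - hsymm c b
      rw [hg c, hcoef]
      module
  exact ⟨g, hy.conj hbc hε hg⟩

theorem exists_of_finrank_fixedSpace [FiniteDimensional F V] (h2 : (2 : F) ≠ 0)
    (hpos : 0 < Module.finrank F V) (hsymm : ∀ v w : V, B v w = B w v)
    (hnondeg : ∀ v : V, (∀ w : V, B v w = 0) → v = 0) {x : isometryGroup B} (hx2 : x ^ 2 = 1)
    (hfix : Module.finrank F (fixedSpace (x : V ≃ₗ[F] V)) = Module.finrank F V - 1) :
    ∃ a, B a a ≠ 0 ∧ IsReflectionAlong B a (x : V ≃ₗ[F] V) := by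
  set f : V ≃ₗ[F] V := (x : V ≃ₗ[F] V) with hfdef
  have hfB : ∀ v w, B (f v) (f w) = B v w := x.2
  have hff : ∀ v, f (f v) = v := fun v => by
    have := congrArg (fun z : isometryGroup B => (z : V ≃ₗ[F] V) v) hx2
    simpa [pow_two] using this
  have hmem : ∀ v, v ∈ fixedSpace f ↔ f v = v := fun v => by
    simp [fixedSpace, sub_eq_zero]
  obtain ⟨v, hv⟩ : ∃ v, f v ≠ v := by
    by_contra! h
    have : fixedSpace f = ⊤ := by
      ext v
      simp [hmem, h]
    rw [this, finrank_top] at hfix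
    omega
  obtain ⟨a, ha0, hfa⟩ : ∃ a, a ≠ 0 ∧ f a = -a :=
    ⟨f v - v, sub_ne_zero.2 hv, by rw [map_sub, hff]; abel⟩
  have hle : fixedSpace f ≤ LinearMap.ker (B a) := by
    intro w hw
    have h := hfB a w
    rw [hfa, (hmem w).1 hw, map_neg, LinearMap.neg_apply] at h
    have : 2 * B a w = 0 := by linear_combination -h
    simpa [h2] using this
  have hlt : Module.finrank F (LinearMap.ker (B a)) < Module.finrank F V := by
    refine Submodule.finrank_lt fun h => ha0 (hnondeg a fun w => ?_)
    rw [LinearMap.ker_eq_top] at h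
    simp [h]
  have heq : fixedSpace f = LinearMap.ker (B a) :=
    Submodule.eq_of_le_of_finrank_le hle (by omega)
  have hperp : ∀ w, B a w = 0 → f w = w := fun w hw => by
    rw [← hmem, heq]
    exact hw
  have haa : B a a ≠ 0 := by
    intro h
    have h' := hperp a h
    rw [hfa] at h'
    have : (2 : F) • a = 0 := by
      rw [two_smul]
      nth_rewrite 1 [← h']
      abel
    exact (smul_ne_zero h2 ha0) this
  refine ⟨a, haa, fun v => ?_⟩
  have h := hperp (v - (B v a / B a a) • a) (by
    simp only [map_sub, map_smul, smul_eq_mul, hsymm a v]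
    field_simp
    ring)
  rw [map_sub, map_smul, hfa] at h
  linear_combination (norm := module) h

theorem exists_orthogonal_anisotropic (h2 : (2 : F) ≠ 0) (hsymm : ∀ v w : V, B v w = B w v)
    (hnondeg : ∀ v : V, (∀ w : V, B v w = 0) → v = 0) {U : Submodule F V} (hU : U ≠ ⊤)
    (hproj : ∀ v, ∃ u ∈ U, ∀ w ∈ U, B (v - u) w = 0) :
    ∃ w, (∀ u ∈ U, B w u = 0) ∧ B w w ≠ 0 := by
  obtain ⟨v, -, hv⟩ := SetLike.exists_of_lt hU.lt_top
  obtain ⟨u, hu, hvu⟩ := hproj v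
  have hne : v - u ≠ 0 := fun h => hv (by rwa [sub_eq_zero.1 h])
  obtain ⟨z, hz⟩ : ∃ z, B (v - u) z ≠ 0 := by
    by_contra! h
    exact hne (hnondeg _ h)
  obtain ⟨u', hu', hzu⟩ := hproj z
  by_contra! h
  have h1 := h _ hvu
  have h3 := h _ hzu
  have h4 := h (v - u + (z - u')) fun w hw => by
    rw [map_add, LinearMap.add_apply, hvu w hw, hzu w hw, add_zero]
  have h5 : B (v - u) (z - u') = B (v - u) z := by rw [map_sub, hvu u' hu', sub_zero]
  rw [map_add B, LinearMap.add_apply, map_add, map_add, h1, h3, hsymm (z - u'), h5] at h4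
  exact mul_ne_zero h2 hz (by linear_combination h4)

theorem exists_orthogonal_pair [FiniteDimensional F V] (h2 : (2 : F) ≠ 0)
    (hdim : 3 ≤ Module.finrank F V) (hsymm : ∀ v w : V, B v w = B w v)
    (hnondeg : ∀ v : V, (∀ w : V, B v w = 0) → v = 0) {a : V} (ha : B a a ≠ 0) :
    ∃ d e, B d a = 0 ∧ B e a = 0 ∧ B e d = 0 ∧ B d d ≠ 0 ∧ B e e ≠ 0 := by
  have hspan (s : Finset V) (hs : s.card ≤ 2) : Submodule.span F (s : Set V) ≠ ⊤ := by
    intro h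
    have := finrank_span_finset_le_card (R := F) s
    rw [Set.finrank, h, finrank_top] at this
    omega
  classical
  obtain ⟨d, hd, hdd⟩ := exists_orthogonal_anisotropic h2 hsymm hnondeg (hspan {a} (by simp))
    (fun v => ⟨(B v a / B a a) • a, Submodule.smul_mem _ _ (Submodule.subset_span (by simp)),
      fun w hw => by
        rw [Finset.coe_singleton, Submodule.mem_span_singleton] at hw
        obtain ⟨k, rfl⟩ := hw
        simp only [map_sub, map_smul, LinearMap.sub_apply, LinearMap.smul_apply, smul_eq_mul]
        field_simp
        ring⟩)
  have hda : B d a = 0 := hd a (Submodule.subset_span (by simp))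
  have had : B a d = 0 := by rw [hsymm, hda]
  obtain ⟨e, he, hee⟩ := exists_orthogonal_anisotropic h2 hsymm hnondeg
    (hspan {a, d} Finset.card_le_two)
    (fun v => ⟨(B v a / B a a) • a + (B v d / B d d) • d,
      add_mem (Submodule.smul_mem _ _ (Submodule.subset_span (by simp)))
        (Submodule.smul_mem _ _ (Submodule.subset_span (by simp))),
      fun w hw => by
        rw [Finset.coe_pair, Submodule.mem_span_pair] at hw
        obtain ⟨k, l, rfl⟩ := hw
        simp only [map_sub, map_add, map_smul, LinearMap.sub_apply, LinearMap.add_apply,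
          LinearMap.smul_apply, smul_eq_mul, hda, had]
        field_simp
        ring⟩)
  exact ⟨d, e, hda, he a (Submodule.subset_span (by simp)),
    he d (Submodule.subset_span (by simp)), hdd, hee⟩

end Orthogonal

section FiniteField

variable {F : Type*} [Field F] [Fintype F]

theorem exists_mul_sq_add_mul_sq_eq (hF : Fintype.card F % 2 = 1) {d e : F} (hd : d ≠ 0)
    (he : e ≠ 0) (c : F) : ∃ u v : F, d * u ^ 2 + e * v ^ 2 = c := by
  open Polynomial in
  obtain ⟨u, v, h⟩ := FiniteField.exists_root_sum_quadratic (f := C d * X ^ 2 + C 0 * X + C (-c))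
    (g := C e * X ^ 2 + C 0 * X + C 0) (degree_quadratic hd) (degree_quadratic he) hF
  refine ⟨u, v, ?_⟩
  simp at h
  linear_combination h

theorem exists_not_isSquare_four_sub_sq (h2 : (2 : F) ≠ 0) (hF : Fintype.card F % 2 = 1)
    (h3 : Fintype.card F ≠ 3) {δ : F} (hδ : ¬ IsSquare δ) : ∃ u : F, ¬ IsSquare (4 - u ^ 2) := by
  by_contra! h
  have hsub (s : F) : IsSquare (1 - s ^ 2) := by
    obtain ⟨r, hr⟩ := h (2 * s)
    refine ⟨r / 2, ?_⟩
    field_simp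
    linear_combination hr
  obtain ⟨v, hv⟩ : ∃ v : F, v ∉ ({0, 1, -1} : Set F) := by
    by_contra! hall
    classical
    have hle : Fintype.card F ≤ ({0, 1, -1} : Finset F).card :=
      Finset.card_le_card fun w _ => by simpa using hall w
    have hlt : 1 < Fintype.card F := Fintype.one_lt_card
    have := (Finset.card_le_three (a := (0 : F)) (b := 1) (c := -1))
    omega
  simp only [Set.mem_insert_iff, Set.mem_singleton_iff, not_or] at hv
  obtain ⟨hv0, hv1, hv2⟩ := hv
  obtain ⟨i, hi⟩ : IsSquare (-1 : F) := by
    obtain ⟨r, hr⟩ := hsub v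
    obtain ⟨s, hs⟩ := hsub v⁻¹
    have hr0 : r ≠ 0 := by
      rintro rfl
      have : (v - 1) * (v + 1) = 0 := by linear_combination -hr
      rcases mul_eq_zero.1 this with h | h
      · exact hv1 (sub_eq_zero.1 h)
      · exact hv2 (eq_neg_of_add_eq_zero_left h)
    refine ⟨s * v / r, ?_⟩
    field_simp
    field_simp at hs
    linear_combination hs + hr
  obtain ⟨u, v, huv⟩ := exists_mul_sq_add_mul_sq_eq hF (one_ne_zero (α := F)) one_ne_zero δ
  apply hδ
  by_cases hu : u = 0
  · exact ⟨v, by subst hu; linear_combination -huv⟩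
  · obtain ⟨r, hr⟩ := hsub (i * v / u)
    refine ⟨u * r, ?_⟩
    field_simp at hr
    linear_combination hr - huv - v ^ 2 * hi

theorem isSquare_mul_of_not_isSquare (h2 : (2 : F) ≠ 0) {a b : F} (ha : ¬ IsSquare a)
    (hb : ¬ IsSquare b) : IsSquare (a * b) := by
  classical
  have hF : ringChar F ≠ 2 := fun h => h2 (by
    have := ringChar.Nat.cast_ringChar (R := F)
    rw [h] at this
    exact_mod_cast this)
  have h0 : a * b ≠ 0 :=
    mul_ne_zero (fun h => ha (h ▸ IsSquare.zero)) fun h => hb (h ▸ IsSquare.zero)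
  rw [← quadraticChar_one_iff_isSquare h0, map_mul,
    (quadraticChar_neg_one_iff_not_isSquare).2 ha, (quadraticChar_neg_one_iff_not_isSquare).2 hb]
  norm_num

end FiniteField

theorem isPGroup_two_closure_pair {G : Type*} [Group G] {x z : G} (hx : x ^ 2 = 1) (hz : z ^ 2 = 1)
    (hxz : (x * z) ^ 4 = 1) : IsPGroup 2 (Subgroup.closure {x, z}) := by
  have hxi : x⁻¹ = x := inv_eq_of_mul_eq_one_right (by rw [← pow_two, hx])
  have hzi : z⁻¹ = z := inv_eq_of_mul_eq_one_right (by rw [← pow_two, hz])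
  have hxx : x * x = 1 := by rw [← pow_two, hx]
  have hswap : SemiconjBy x (x * z) (x * z)⁻¹ := by
    rw [SemiconjBy, mul_inv_rev, hxi, hzi, ← mul_assoc, hxx, one_mul, mul_assoc, hxx, mul_one]
  have hswap' (k : ℤ) : x * (x * z) ^ k = (x * z) ^ (-k) * x := by
    have := hswap.zpow_right k
    rwa [SemiconjBy, inv_zpow'] at this
  have key : ∀ g ∈ Subgroup.closure {x, z}, ∃ k : ℤ, g = (x * z) ^ k ∨ g = (x * z) ^ k * x := by
    intro g hg
    induction hg using Subgroup.closure_induction with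
    | mem g hg =>
      rcases hg with rfl | rfl
      · exact ⟨0, Or.inr (by simp)⟩
      · refine ⟨-1, Or.inr ?_⟩
        rw [zpow_neg_one, mul_inv_rev, hxi, hzi, mul_assoc, hxx, mul_one]
    | one => exact ⟨0, Or.inl (by simp)⟩
    | mul g h _ _ hg hh =>
      obtain ⟨k, rfl | rfl⟩ := hg <;> obtain ⟨l, rfl | rfl⟩ := hh
      · exact ⟨k + l, Or.inl (zpow_add _ _ _).symm⟩
      · exact ⟨k + l, Or.inr (by rw [zpow_add, mul_assoc])⟩
      · exact ⟨k + -l, Or.inr (by rw [zpow_add, mul_assoc, hswap', mul_assoc])⟩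
      · exact ⟨k + -l, Or.inl (by
          rw [zpow_add, mul_assoc, ← mul_assoc x, hswap', mul_assoc, hxx, mul_one])⟩
    | inv g _ hg =>
      obtain ⟨k, rfl | rfl⟩ := hg
      · exact ⟨-k, Or.inl (zpow_neg _ _).symm⟩
      · exact ⟨k, Or.inr (by rw [mul_inv_rev, hxi, ← zpow_neg, hswap', neg_neg])⟩
  rintro ⟨g, hg⟩
  refine ⟨2, Subtype.ext ?_⟩
  change g ^ 4 = 1
  obtain ⟨k, rfl | rfl⟩ := key g hg
  · rw [← zpow_natCast, zpow_comm, zpow_natCast, hxz, one_zpow]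
  · have : ((x * z) ^ k * x) ^ 2 = 1 := by
      rw [pow_two, mul_assoc, ← mul_assoc x, hswap', mul_assoc, hxx, mul_one, ← zpow_add,
        add_neg_cancel, zpow_zero]
    rw [show 4 = 2 * 2 from rfl, pow_mul, this, one_pow]

section Product

variable {F V : Type*} [Field F] [AddCommGroup V] [Module F V] {B : V →ₗ[F] V →ₗ[F] F}

theorem trace_relation_pow_two_pow {P : V ≃ₗ[F] V} {a : V} {t : F} (ht : ¬ IsSquare (4 - t ^ 2))
    (hP : P (P a) + a = t • P a) (k : ℕ) :
    ∃ s : F, ¬ IsSquare (4 - s ^ 2) ∧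
      (P ^ 2 ^ k) ((P ^ 2 ^ k) a) + a = s • (P ^ 2 ^ k) a := by
  induction k with
  | zero => exact ⟨t, ht, by simpa using hP⟩
  | succ k ih =>
    obtain ⟨s, hs, h⟩ := ih
    refine ⟨s ^ 2 - 2, ?_, ?_⟩
    · rintro ⟨r, hr⟩
      have hs0 : s ≠ 0 := by
        rintro rfl
        exact hs ⟨2, by norm_num⟩
      refine hs ⟨r / s, ?_⟩
      field_simp
      linear_combination hr
    · have hpow : ∀ v, (P ^ 2 ^ (k + 1)) v = (P ^ 2 ^ k) ((P ^ 2 ^ k) v) := fun v => by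
        rw [pow_succ, pow_mul, pow_two, LinearEquiv.mul_apply]
      generalize P ^ 2 ^ k = A at h hpow
      rw [hpow, hpow]
      have h1 := congrArg A h
      rw [map_add, map_smul] at h1
      have h2 := congrArg A h1
      rw [map_add, map_smul] at h2
      linear_combination (norm := module) h2 + s • h1 + h

theorem not_isPGroup_closure_of_trace (hsymm : ∀ v w : V, B v w = B w v)
    {a c : V} (ha : B a a ≠ 0) (hc : B c c ≠ 0) {x z : isometryGroup B}
    (hx : IsReflectionAlong B a (x : V ≃ₗ[F] V)) (hz : IsReflectionAlong B c (z : V ≃ₗ[F] V))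
    {t : F} (htrace : (t + 2) * (B a a * B c c) = 4 * B a c ^ 2) (ht : ¬ IsSquare (4 - t ^ 2)) :
    ¬ IsPGroup 2 (Subgroup.closure {x, z}) := by
  intro h
  obtain ⟨k, hk⟩ := h ⟨x * z, mul_mem (Subgroup.subset_closure (by simp))
    (Subgroup.subset_closure (by simp))⟩
  replace hk : (x * z) ^ 2 ^ k = 1 := congrArg Subtype.val hk
  have hk' : ((x : V ≃ₗ[F] V) * (z : V ≃ₗ[F] V)) ^ 2 ^ k = 1 := congrArg Subtype.val hk
  have hP : ∀ v, ((x : V ≃ₗ[F] V) * (z : V ≃ₗ[F] V)) v = (x : V ≃ₗ[F] V) ((z : V ≃ₗ[F] V) v) :=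
    fun _ => rfl
  have ht' : t = 4 * B a c ^ 2 / (B a a * B c c) - 2 := by
    field_simp
    linear_combination htrace
  obtain ⟨s, hs, h⟩ := trace_relation_pow_two_pow (P := (x : V ≃ₗ[F] V) * (z : V ≃ₗ[F] V))
    (a := a) ht (by
      simp only [hP, hx _, hz _, map_sub, map_smul, LinearMap.sub_apply, LinearMap.smul_apply,
        smul_eq_mul, hsymm c a, ht']
      match_scalars <;> field_simp <;> ring) k
  rw [hk'] at h
  have ha0 : a ≠ 0 := by
    rintro rfl
    simp at ha
  have : (2 - s) • a = 0 := by
    simp only [LinearEquiv.coe_one, id_eq] at h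
    linear_combination (norm := module) h
  have hs2 : s = 2 := by
    rcases smul_eq_zero.1 this with h | h
    · linear_combination -h
    · exact absurd h ha0
  exact hs ⟨0, by rw [hs2]; ring⟩

theorem mul_pow_four_eq_one_of_card_eq_three [Fintype F] (hF : Fintype.card F = 3)
    (hsymm : ∀ v w : V, B v w = B w v) {a c : V} (ha : B a a ≠ 0) (hc : B c c ≠ 0)
    (hac : ¬ IsSquare (B a a * B c c)) {x z : isometryGroup B}
    (hx : IsReflectionAlong B a (x : V ≃ₗ[F] V)) (hz : IsReflectionAlong B c (z : V ≃ₗ[F] V)) :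
    (x * z) ^ 4 = 1 := by
  have h3 : (3 : F) = 0 := by
    have := FiniteField.cast_card_eq_zero F
    rw [hF] at this
    exact_mod_cast this
  have hcube (s : F) : s ^ 3 = s := by
    have := FiniteField.pow_card s
    rwa [hF] at this
  have hsq {s : F} (hs : s ≠ 0) : s * s = 1 :=
    mul_left_cancel₀ hs (by linear_combination hcube s)
  have hneg : B c c = -B a a := by
    have h1 := hsq ha
    have h2 := hsq hc
    have h4 : (B c c - B a a) * (B c c + B a a) = 0 := by linear_combination h2 - h1
    rcases mul_eq_zero.1 h4 with h | h
    · exact absurd ⟨B a a, by rw [sub_eq_zero.1 h]⟩ hac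
    · linear_combination h
  have hinv : (B a a)⁻¹ = B a a := inv_eq_of_mul_eq_one_right (hsq ha)
  have hxv (v : V) : (x : V ≃ₗ[F] V) v = v + (B a a * B v a) • a := by
    rw [hx v, div_eq_mul_inv, hinv]
    match_scalars
    · rfl
    · linear_combination (-(B v a * B a a)) * h3
  have hzv (v : V) : (z : V ≃ₗ[F] V) v = v - (B a a * B v c) • c := by
    rw [hz v, hneg, div_eq_mul_inv, inv_neg, hinv]
    match_scalars
    · rfl
    · linear_combination (B v c * B a a) * h3
  have hβ := hcube (B a c)
  have hα := hsq ha
  refine Subtype.ext (LinearEquiv.ext fun v => ?_)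
  change (x : V ≃ₗ[F] V) ((z : V ≃ₗ[F] V) ((x : V ≃ₗ[F] V) ((z : V ≃ₗ[F] V)
    ((x : V ≃ₗ[F] V) ((z : V ≃ₗ[F] V) ((x : V ≃ₗ[F] V) ((z : V ≃ₗ[F] V) v))))))) = v
  simp only [hxv, hzv, map_sub, map_add, map_smul, LinearMap.sub_apply, LinearMap.add_apply,
    LinearMap.smul_apply, smul_eq_mul, hsymm c a, hneg]
  generalize B a a = α at *
  generalize B a c = β at *
  generalize B v a = s at *
  generalize B v c = r at *
  match_scalars
  · ring
  · grind
  · grind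

end Product

/-- **Non-conjugate reflections in finite orthogonal groups.**
Let `V` be an `n`-dimensional vector space, `n ≥ 3`, over a finite field `F` of odd
characteristic, with a nondegenerate symmetric bilinear form `B`, and let `G` be the
isometry group of `B`. If `x, y ∈ G` are non-conjugate reflections, then `⟨x, g⁻¹yg⟩`
is a 2-group for all `g ∈ G` if and only if `|F| = 3`. -/
theorem statement_11 {F : Type*} [Field F] [Fintype F] (hodd : Odd (ringChar F))
    {V : Type*} [AddCommGroup V] [Module F V] [FiniteDimensional F V]
    (n : ℕ) (hn : 3 ≤ n) (hdim : Module.finrank F V = n)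
    (B : V →ₗ[F] V →ₗ[F] F)
    (hsymm : ∀ v w : V, B v w = B w v)
    (hnondeg : ∀ v : V, (∀ w : V, B v w = 0) → v = 0)
    (x y : ↥(isometryGroup B))
    (hx2 : x ^ 2 = 1)
    (hxfix : Module.finrank F (fixedSpace (x : V ≃ₗ[F] V)) = n - 1)
    (hy2 : y ^ 2 = 1)
    (hyfix : Module.finrank F (fixedSpace (y : V ≃ₗ[F] V)) = n - 1)
    (hconj : ¬ IsConj x y) :
    (∀ g : ↥(isometryGroup B), IsPGroup 2 ↥(Subgroup.closure {x, g⁻¹ * y * g})) ↔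
      Fintype.card F = 3 := by
  have h2 : (2 : F) ≠ 0 := Ring.two_ne_zero fun h => by
    rw [h] at hodd
    exact absurd hodd (by decide)
  have hF : Fintype.card F % 2 = 1 :=
    FiniteField.odd_card_of_char_ne_two fun h => by
      rw [h] at hodd
      exact absurd hodd (by decide)
  subst hdim
  obtain ⟨a, ha, hxa⟩ := exists_of_finrank_fixedSpace h2 (by omega) hsymm hnondeg hx2 hxfix
  obtain ⟨b, hb, hyb⟩ := exists_of_finrank_fixedSpace h2 (by omega) hsymm hnondeg hy2 hyfix
  have hab : ¬ IsSquare (B a a * B b b) := by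
    rintro ⟨s, hs⟩
    have hs0 : s ≠ 0 := by
      rintro rfl
      exact mul_ne_zero ha hb (by simpa using hs)
    have hca : B ((s / B a a) • a) ((s / B a a) • a) = B b b := by
      simp only [map_smul, LinearMap.smul_apply, smul_eq_mul]
      field_simp
      linear_combination -hs
    obtain ⟨g, hg⟩ := exists_isReflectionAlong_conj h2 hsymm hb hca hyb
    have hgx : g⁻¹ * y * g = x := by
      refine Subtype.ext (LinearEquiv.ext fun v => ?_)
      rw [hg v, hxa v]
      simp only [map_smul, LinearMap.smul_apply, smul_eq_mul, smul_smul]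
      congr 2
      field_simp
    refine hconj (isConj_iff.2 ⟨g, ?_⟩)
    rw [← hgx]
    group
  constructor
  · intro h
    by_contra h3
    obtain ⟨u, hu⟩ := exists_not_isSquare_four_sub_sq h2 hF h3 hab
    have hu0 : u ≠ 0 := by
      rintro rfl
      exact hu ⟨2, by norm_num⟩
    obtain ⟨r, hr⟩ : IsSquare ((4 - u ^ 2) * (B a a * B b b)) :=
      isSquare_mul_of_not_isSquare h2 hu hab
    obtain ⟨d, e, hda, hea, hed, hd, he⟩ := exists_orthogonal_pair h2 hn hsymm hnondeg ha
    obtain ⟨k, l, hkl⟩ := exists_mul_sq_add_mul_sq_eq hF hd he (B b b - (r / 2) ^ 2 / B a a)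
    have hcc : B ((r / 2 / B a a) • a + k • d + l • e) ((r / 2 / B a a) • a + k • d + l • e) =
        B b b := by
      simp only [map_add, map_smul, LinearMap.add_apply, LinearMap.smul_apply, smul_eq_mul, hda,
        hea, hed, hsymm a d, hsymm a e, hsymm d e]
      field_simp
      field_simp at hkl
      linear_combination hkl
    have hac : B a ((r / 2 / B a a) • a + k • d + l • e) = r / 2 := by
      simp only [map_add, map_smul, smul_eq_mul, hda, hea, hsymm a d, hsymm a e]
      field_simp
      ring
    obtain ⟨g, hg⟩ := exists_isReflectionAlong_conj h2 hsymm hb hcc hyb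
    refine not_isPGroup_closure_of_trace hsymm ha (hcc ▸ hb) hxa hg (t := 2 - u ^ 2) ?_ ?_ (h g)
    · rw [hcc, hac]
      field_simp
      linear_combination 4 * hr
    · rintro ⟨s, hs⟩
      refine hu ⟨s / u, ?_⟩
      field_simp
      linear_combination hs
  · intro h3 g
    have hgb : (g : V ≃ₗ[F] V) ((g : V ≃ₗ[F] V).symm b) = (1 : F) • b := by simp
    have hcc : B ((g : V ≃ₗ[F] V).symm b) ((g : V ≃ₗ[F] V).symm b) = B b b := (g⁻¹).2 b b
    refine isPGroup_two_closure_pair hx2 ?_ (mul_pow_four_eq_one_of_card_eq_three h3 hsymm ha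
      (hcc ▸ hb) (hcc ▸ hab) hxa (hyb.conj hcc (mul_one 1) hgb))
    have := conj_pow (i := 2) (a := g⁻¹) (b := y)
    rwa [inv_inv, hy2, mul_one, inv_mul_cancel] at this
end

section
/- Let n ≥ 2 and let V be a 2n-dimensional vector space over the field F₃ with three elements, equipped with a nondegenerate symmetric bilinear form B. Let d be an isometry of B (B(dv, dw) = B(v,w) for all v,w) with d² = 1 whose fixed space has dimension 2n − 1 (a reflection), and let c be an invertible linear map of V with c² = 1 whose +1 and −1 eigenspaces are both totally isotropic with respect to B (hence each of dimension n). Then the subgroup of GL(V) generated by c and d is a 2-group. -/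
/-- Two involutions whose product has order dividing `4` generate a `2`-group. -/
theorem isPGroup_two_closure_pair_s13 {G : Type*} [Group G] {c d : G}
    (hc : c ^ 2 = 1) (hd : d ^ 2 = 1) (h : (c * d) ^ 4 = 1) :
    IsPGroup 2 ↥(Subgroup.closure {c, d}) := by
  have hci : c⁻¹ = c := by rw [inv_eq_iff_mul_eq_one, ← sq, hc]
  have hdi : d⁻¹ = d := by rw [inv_eq_iff_mul_eq_one, ← sq, hd]
  have hcc : c * c = 1 := by rw [← sq, hc]
  have hconj : ∀ k : ℤ, c * (c * d) ^ k * c = (c * d) ^ (-k) := by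
    intro k
    have h1 : c * (c * d) * c⁻¹ = (c * d)⁻¹ := by
      rw [mul_inv_rev, hci, hdi, ← mul_assoc, hcc, one_mul]
    calc c * (c * d) ^ k * c = c * (c * d) ^ k * c⁻¹ := by rw [hci]
      _ = (c * d) ^ (-k) := by rw [← conj_zpow, h1, inv_zpow, zpow_neg]
  have hswap : ∀ k : ℤ, c * (c * d) ^ k = (c * d) ^ (-k) * c := by
    intro k
    rw [← hconj, mul_assoc _ c c, hcc, mul_one]
  have hd_eq : ∀ y, d * y = c * ((c * d) * y) := by
    intro y
    rw [← mul_assoc, ← mul_assoc, hcc, one_mul]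
  have hc_step : ∀ y, (∃ k : ℤ, y = (c * d) ^ k ∨ y = (c * d) ^ k * c) →
      ∃ k : ℤ, c * y = (c * d) ^ k ∨ c * y = (c * d) ^ k * c := by
    rintro _ ⟨k, rfl | rfl⟩
    · exact ⟨-k, Or.inr (hswap k)⟩
    · exact ⟨-k, Or.inl (by rw [← mul_assoc, hconj])⟩
  have hd_step : ∀ y, (∃ k : ℤ, y = (c * d) ^ k ∨ y = (c * d) ^ k * c) →
      ∃ k : ℤ, d * y = (c * d) ^ k ∨ d * y = (c * d) ^ k * c := by
    rintro y ⟨k, hy⟩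
    rw [hd_eq]
    refine hc_step _ ⟨1 + k, ?_⟩
    rcases hy with rfl | rfl
    · exact Or.inl (by rw [zpow_one_add])
    · exact Or.inr (by rw [zpow_one_add, mul_assoc (c * d)])
  have key : ∀ g ∈ Subgroup.closure {c, d},
      ∃ k : ℤ, g = (c * d) ^ k ∨ g = (c * d) ^ k * c := by
    intro g hg
    induction hg using Subgroup.closure_induction_left with
    | one => exact ⟨0, Or.inl (by simp)⟩
    | mul_left x hx y _ ih =>
      rcases hx with rfl | rfl
      · exact hc_step y ih
      · exact hd_step y ih
    | inv_mul_cancel x hx y _ ih =>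
      rcases hx with rfl | rfl
      · rw [hci]; exact hc_step y ih
      · rw [hdi]; exact hd_step y ih
  rintro ⟨g, hg⟩
  refine ⟨2, Subtype.ext ?_⟩
  change g ^ 4 = 1
  obtain ⟨k, rfl | rfl⟩ := key g hg
  · rw [← zpow_natCast, ← zpow_mul, mul_comm, zpow_mul, zpow_natCast, h, one_zpow]
  · have h2 : ((c * d) ^ k * c) ^ 2 = 1 := by
      rw [sq, mul_assoc, ← mul_assoc c, hconj, zpow_neg, mul_inv_cancel]
    rw [show 4 = 2 * 2 from rfl, pow_mul, h2, one_pow]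

/-- An isometric reflection `d` moves every vector along a fixed line `⟨a⟩`, with coefficient
`t v` satisfying `B v a = t v * B a a`, and `a` is anisotropic. -/
theorem exists_root_of_reflection {V : Type*} [AddCommGroup V] [Module (ZMod 3) V]
    [FiniteDimensional (ZMod 3) V] (B : V →ₗ[ZMod 3] V →ₗ[ZMod 3] ZMod 3)
    (hsymm : ∀ v w : V, B v w = B w v)
    (hnondeg : ∀ v : V, (∀ w : V, B v w = 0) → v = 0)
    (d : V ≃ₗ[ZMod 3] V) (hdiso : ∀ v w : V, B (d v) (d w) = B v w) (hd2 : d ^ 2 = 1)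
    (hdfix : Module.finrank (ZMod 3) (fixedSpace d) + 1 = Module.finrank (ZMod 3) V) :
    ∃ a : V, B a a ≠ 0 ∧ ∀ v, d v = v + (B v a / B a a) • a := by
  have h3 : (3 : ZMod 3) = 0 := rfl
  have hdd : ∀ v, d (d v) = v := fun v => by
    have := LinearEquiv.congr_fun hd2 v
    rwa [sq] at this
  have hrange : Module.finrank (ZMod 3) (LinearMap.range (d.toLinearMap - LinearMap.id)) = 1 := by
    have := LinearMap.finrank_range_add_finrank_ker (d.toLinearMap - LinearMap.id)
    rw [← hdfix, fixedSpace] at this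
    omega
  obtain ⟨⟨a, ha⟩, ha0, hspan⟩ := finrank_eq_one_iff'.1 hrange
  have ha0 : a ≠ 0 := fun h => ha0 (Subtype.ext h)
  have hda : d a = -a := by
    obtain ⟨v, rfl⟩ := ha
    simp [hdd]
  have hmove : ∀ v, ∃ t : ZMod 3, d v = v + t • a := by
    intro v
    obtain ⟨t, ht⟩ := hspan ⟨d v - v, v, rfl⟩
    have ht : t • a = d v - v := congrArg Subtype.val ht
    exact ⟨t, by rw [ht]; abel⟩
  have hcoef : ∀ v, ∀ t : ZMod 3, d v = v + t • a → B v a = t * B a a := by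
    intro v t ht
    have h1 := hdiso v a
    rw [ht, hda] at h1
    simp only [map_add, map_neg, map_smul, LinearMap.add_apply, LinearMap.smul_apply,
      smul_eq_mul] at h1
    linear_combination h1 + B v a * h3
  have haa : B a a ≠ 0 := by
    intro h
    refine ha0 (hnondeg a fun w => ?_)
    obtain ⟨t, ht⟩ := hmove w
    rw [hsymm, hcoef w t ht, h, mul_zero]
  refine ⟨a, haa, fun v => ?_⟩
  obtain ⟨t, ht⟩ := hmove v
  rw [hcoef v t ht, mul_div_cancel_right₀ _ haa, ht]

/-- If both eigenspaces of the involution `c` are totally isotropic, then `c v` is orthogonal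
to `v`. -/
theorem apply_involution_self_eq_zero {V : Type*} [AddCommGroup V] [Module (ZMod 3) V]
    (B : V →ₗ[ZMod 3] V →ₗ[ZMod 3] ZMod 3) (hsymm : ∀ v w : V, B v w = B w v)
    (c : V ≃ₗ[ZMod 3] V) (hcc : ∀ v, c (c v) = v)
    (hplus : ∀ u ∈ LinearMap.ker (c.toLinearMap - LinearMap.id),
      ∀ u' ∈ LinearMap.ker (c.toLinearMap - LinearMap.id), B u u' = 0)
    (hminus : ∀ u ∈ LinearMap.ker (c.toLinearMap + LinearMap.id),
      ∀ u' ∈ LinearMap.ker (c.toLinearMap + LinearMap.id), B u u' = 0) (v : V) :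
    B (c v) v = 0 := by
  have h3 : (3 : ZMod 3) = 0 := rfl
  have hp : v + c v ∈ LinearMap.ker (c.toLinearMap - LinearMap.id) := by
    simp [hcc, add_comm]
  have hm : v - c v ∈ LinearMap.ker (c.toLinearMap + LinearMap.id) := by
    simp [hcc]
  have h1 := hplus _ hp _ hp
  have h2 := hminus _ hm _ hm
  simp only [map_add, map_sub, LinearMap.add_apply, LinearMap.sub_apply, hsymm v (c v)] at h1 h2
  linear_combination h1 - h2 - B (c v) v * h3

/-- **Example in the orthogonal groups over `F₃`.**
Let `V` be a `2n`-dimensional vector space over `F₃` (`n ≥ 2`) with a nondegenerate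
symmetric bilinear form `B`. Let `d` be a reflection in the isometry group of `B` and
`c` an invertible linear map with `c² = 1` whose `±1` eigenspaces are both totally
isotropic. Then the subgroup of `GL(V)` generated by `c` and `d` is a 2-group. -/
theorem statement_13 (n : ℕ) (hn : 2 ≤ n)
    {V : Type*} [AddCommGroup V] [Module (ZMod 3) V] [FiniteDimensional (ZMod 3) V]
    (hdim : Module.finrank (ZMod 3) V = 2 * n)
    (B : V →ₗ[ZMod 3] V →ₗ[ZMod 3] ZMod 3)
    (hsymm : ∀ v w : V, B v w = B w v)
    (hnondeg : ∀ v : V, (∀ w : V, B v w = 0) → v = 0)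
    (d : V ≃ₗ[ZMod 3] V)
    (hdiso : ∀ v w : V, B (d v) (d w) = B v w)
    (hd2 : d ^ 2 = 1)
    (hdfix : Module.finrank (ZMod 3) (fixedSpace d) = 2 * n - 1)
    (c : V ≃ₗ[ZMod 3] V)
    (hc2 : c ^ 2 = 1)
    (hplus : ∀ u ∈ LinearMap.ker (c.toLinearMap - LinearMap.id),
      ∀ u' ∈ LinearMap.ker (c.toLinearMap - LinearMap.id), B u u' = 0)
    (hminus : ∀ u ∈ LinearMap.ker (c.toLinearMap + LinearMap.id),
      ∀ u' ∈ LinearMap.ker (c.toLinearMap + LinearMap.id), B u u' = 0) :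
    IsPGroup 2 ↥(Subgroup.closure {c, d}) := by
  have hcc : ∀ v, c (c v) = v := fun v => by
    have := LinearEquiv.congr_fun hc2 v
    rwa [sq] at this
  obtain ⟨a, -, hda⟩ := exists_root_of_reflection B hsymm hnondeg d hdiso hd2 (by omega)
  have hca : B (c a) a = 0 := apply_involution_self_eq_zero B hsymm c hcc hplus hminus a
  have hdca : d (c a) = c a := by rw [hda, hca, zero_div, zero_smul, add_zero]
  have hcomm : (c * d * c) * d = d * (c * d * c) := by
    ext v
    change c (d (c (d v))) = d (c (d (c v)))
    rw [hda v, hda (c v)]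
    simp only [map_add, map_smul, hdca, hcc]
    rw [hda (c v), hda v]
    simp only [map_add, map_smul, hcc]
    abel
  refine isPGroup_two_closure_pair_s13 hc2 hd2 ?_
  calc (c * d) ^ 4 = (c * d * c * d) * (c * d * c * d) := by simp only [pow_succ, pow_zero, one_mul, mul_assoc]
    _ = (d * (c * d * c)) * (c * d * c * d) := by rw [hcomm]
    _ = d * c * d * c ^ 2 * d * c * d := by simp only [pow_succ, pow_zero, one_mul, mul_assoc]
    _ = d * c * d ^ 2 * c * d := by rw [hc2, mul_one]; simp only [sq, mul_assoc]
    _ = d * c ^ 2 * d := by rw [hd2, mul_one]; simp only [sq, mul_assoc]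
    _ = d ^ 2 := by rw [hc2, mul_one, sq]
    _ = 1 := hd2
end

section
/- Let G be a finite group, p a prime, and x ∈ G a nontrivial p-element such that for every maximal subgroup M of G containing x, the element x belongs to every Sylow p-subgroup of M (equivalently, x ∈ O_p(M)). Then either x belongs to some normal p-subgroup of G (i.e. x ∈ O_p(G)), or there is exactly one maximal subgroup of G containing x. -/
open Subgroup

/-- Let `S` be a set stable under conjugation by its own elements and generating a finite
`p`-group. A proper subset `D` of `S` that is also stable under conjugation by its own elements is
normalized by some element of `S` outside `D`. -/
lemma IsPGroup.exists_mem_normalizer_of_ssubset {G : Type*} [Group G] [Finite G] {p : ℕ}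
    [Fact p.Prime] {S D : Set G} (hp : IsPGroup p (closure S)) (hS : S ⊆ normalizer S)
    (hDS : D ⊂ S) (hD : D ⊆ normalizer D) : ∃ y ∈ S, y ∉ D ∧ y ∈ normalizer D := by
  have : Group.IsNilpotent (closure S) := hp.isNilpotent
  have hSN : closure S ≤ normalizer S := (closure_le _).2 hS
  set K : Subgroup (closure S) := (normalizer D).subgroupOf (closure S)
  rcases eq_or_ne K ⊤ with hKtop | hKtop
  · obtain ⟨y, hyS, hyD⟩ := Set.exists_of_ssubset hDS
    exact ⟨y, hyS, hyD, subgroupOf_eq_top.1 hKtop (subset_closure hyS)⟩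
  · obtain ⟨u, huN, huK⟩ := SetLike.exists_of_lt
      (Group.normalizerCondition_of_isNilpotent K (lt_top_iff_ne_top.2 hKtop))
    have hu : ∃ d ∈ D, (u : G) * d * (u : G)⁻¹ ∉ D := by
      by_contra! h
      exact huK (mem_subgroupOf.2 (mem_normalizer_fintype h))
    obtain ⟨d, hdD, hud⟩ := hu
    have hdK : (⟨d, subset_closure (hDS.1 hdD)⟩ : closure S) ∈ K := mem_subgroupOf.2 (hD hdD)
    exact ⟨_, (hSN u.2 d).1 (hDS.1 hdD), hud, mem_subgroupOf.1 ((huN _).1 hdK)⟩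

/-- The conjugates of `x` form a set stable under conjugation. -/
lemma conj_mem_conjugatesOf {G : Type*} [Group G] {x y : G} (g : G) :
    y ∈ conjugatesOf x ↔ g * y * g⁻¹ ∈ conjugatesOf x := by
  have h : IsConj y (g * y * g⁻¹) := isConj_iff.2 ⟨g, rfl⟩
  exact ⟨fun hy => IsConj.trans hy h, fun hy => IsConj.trans hy h.symm⟩

/-- A subgroup acts by conjugation on the conjugates of `x` that it contains. -/
lemma Subgroup.le_normalizer_conjugatesOf_inter {G : Type*} [Group G] (x : G) (M : Subgroup G) :
    M ≤ normalizer (conjugatesOf x ∩ M) := by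
  refine fun m hm y => and_congr (conj_mem_conjugatesOf m) ?_
  simp [M.mul_mem_cancel_right (M.inv_mem hm), M.mul_mem_cancel_left hm]

/-- If `x` lies in every Sylow `p`-subgroup of every maximal subgroup containing it, then the
conjugates of `x` inside a maximal subgroup generate a `p`-group. -/
lemma isPGroup_closure_conjugatesOf_inter {G : Type*} [Group G] [Finite G] {p : ℕ} [Fact p.Prime]
    {x : G} (hcore : ∀ M : Subgroup G, IsCoatom M → ∀ hxM : x ∈ M,
      ∀ Q : Sylow p ↥M, (⟨x, hxM⟩ : ↥M) ∈ (Q : Subgroup ↥M))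
    {M : Subgroup G} (hM : IsCoatom M) : IsPGroup p (closure (conjugatesOf x ∩ M)) := by
  obtain ⟨Q⟩ : Nonempty (Sylow p M) := inferInstance
  refine (Q.2.map M.subtype).to_le ((closure_le _).2 ?_)
  rintro y ⟨hxy, hyM⟩
  obtain ⟨c, rfl⟩ := isConj_iff.1 (hxy : IsConj x y)
  set e : G ≃* G := MulAut.conj c⁻¹ with he
  have hex : e (c * x * c⁻¹) = x := by simp [he, mul_assoc]
  have hcoatom : IsCoatom (M.map (e : G →* G)) := (e.mapSubgroup.isCoatom_iff M).2 hM
  have hxmem : x ∈ M.map (e : G →* G) := ⟨_, hyM, hex⟩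
  have hmem := hcore _ hcoatom hxmem
    (Q.mapSurjective (f := (e.subgroupMap M : M →* _)) (e.subgroupMap M).surjective)
  obtain ⟨q, hqQ, hq⟩ := hmem
  refine ⟨q, hqQ, e.injective ?_⟩
  rw [hex]
  exact congrArg Subtype.val hq

/-- **Wielandt's criterion applied to a `p`-element.**
Let `x` be a nontrivial `p`-element of a finite group `G` such that for every maximal
subgroup `M` containing `x`, the element `x` lies in every Sylow `p`-subgroup of `M`
(i.e. `x ∈ O_p(M)`). Then either `x` lies in some normal `p`-subgroup of `G`
(i.e. `x ∈ O_p(G)`), or there is exactly one maximal subgroup of `G` containing `x`. -/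
theorem statement_16 {G : Type*} [Group G] [Fintype G] (p : ℕ) [Fact p.Prime]
    (x : G) (hx1 : x ≠ 1) (hpelt : ∃ n : ℕ, orderOf x = p ^ n)
    (hcore : ∀ M : Subgroup G, IsCoatom M → ∀ hxM : x ∈ M,
      ∀ Q : Sylow p ↥M, (⟨x, hxM⟩ : ↥M) ∈ (Q : Subgroup ↥M)) :
    (∃ N : Subgroup G, N.Normal ∧ IsPGroup p ↥N ∧ x ∈ N) ∨
      (∃! M : Subgroup G, IsCoatom M ∧ x ∈ M) := by
  rcases em (∃ N : Subgroup G, N.Normal ∧ IsPGroup p N ∧ x ∈ N) with hN | hN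
  · exact Or.inl hN
  refine Or.inr ?_
  set X : Set G := conjugatesOf x
  have hproper : ∀ D ⊆ X, D.Nonempty → IsPGroup p (closure D) → normalizer D ≠ ⊤ := by
    rintro D hDX ⟨d, hd⟩ hDp htop
    have hnormal : (closure D).Normal := normalizer_eq_top_iff.1
      (top_le_iff.1 (htop.ge.trans (normalizer_le_normalizer_closure D)))
    obtain ⟨c, hc⟩ := isConj_iff.1 (hDX hd : IsConj x d).symm
    exact hN ⟨_, hnormal, hDp, hc ▸ hnormal.conj_mem d (subset_closure hd) c⟩
  obtain ⟨M, hM, hxM⟩ : ∃ M : Subgroup G, IsCoatom M ∧ x ∈ M := by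
    rcases eq_top_or_exists_le_coatom (zpowers x) with h | ⟨M, hM, hle⟩
    · obtain ⟨n, hn⟩ := hpelt
      exact (hN ⟨zpowers x, normalizer_eq_top_iff.1 (top_le_iff.1 (h.ge.trans le_normalizer)),
        IsPGroup.of_card (n := n) (by rw [Nat.card_zpowers, hn]), mem_zpowers x⟩).elim
    · exact ⟨M, hM, hle (mem_zpowers x)⟩
  refine ⟨M, ⟨hM, hxM⟩, ?_⟩
  by_contra! ⟨M', ⟨hM', hxM'⟩, hne⟩
  let F : Set (Set G) := {D | D.Nonempty ∧ ∃ M₁ M₂ : Subgroup G,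
    IsCoatom M₁ ∧ IsCoatom M₂ ∧ M₁ ≠ M₂ ∧ D = X ∩ (M₁ ⊓ M₂ : Subgroup G)}
  have hF : F.Nonempty :=
    ⟨X ∩ (M' ⊓ M : Subgroup G), ⟨x, mem_conjugatesOf_self, hxM', hxM⟩,
      M', M, hM', hM, hne, rfl⟩
  obtain ⟨D, ⟨hDne, M₁, M₂, h₁, h₂, h₁₂, hD⟩, hmax⟩ := F.toFinite.exists_maximal hF
  have hDX : D ⊆ X := hD ▸ Set.inter_subset_left
  have hDself : D ⊆ normalizer D := fun d hd => by
    have hd' : d ∈ X ∩ (M₁ ⊓ M₂ : Subgroup G) := hD ▸ hd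
    rw [hD]
    exact le_normalizer_conjugatesOf_inter x _ hd'.2
  have hD₁ : D ⊆ X ∩ M₁ := hD ▸ Set.inter_subset_inter_right _ inf_le_left
  have hD₂ : D ⊆ X ∩ M₂ := hD ▸ Set.inter_subset_inter_right _ inf_le_right
  have hDp : IsPGroup p (closure D) :=
    (isPGroup_closure_conjugatesOf_inter hcore h₁).to_le (closure_mono hD₁)
  obtain ⟨M₃, h₃, hle⟩ :=
    (eq_top_or_exists_le_coatom (normalizer D)).resolve_left (hproper D hDX hDne hDp)
  have key : ∀ L : Subgroup G, IsCoatom L → D ⊆ X ∩ L → L = M₃ := by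
    intro L hL hDL
    rcases hDL.eq_or_ssubset with heq | hss
    · have hLM : L ≤ M₃ := (heq ▸ le_normalizer_conjugatesOf_inter x L).trans hle
      exact (hL.le_iff_eq h₃.1).1 hLM |>.symm
    · by_contra hLne
      obtain ⟨y, hy, hyD, hyN⟩ :=
        (isPGroup_closure_conjugatesOf_inter hcore hL).exists_mem_normalizer_of_ssubset
          (Set.inter_subset_right.trans (le_normalizer_conjugatesOf_inter x L)) hss hDself
      have hsub : D ⊆ X ∩ (L ⊓ M₃ : Subgroup G) := fun d hd =>
        ⟨hDX hd, (hDL hd).2, hle (hDself hd)⟩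
      exact hyD (hmax ⟨hDne.mono hsub, L, M₃, hL, h₃, hLne, rfl⟩ hsub ⟨hy.1, hy.2, hle hyN⟩)
  exact h₁₂ ((key M₁ h₁ hD₁).trans (key M₂ h₂ hD₂).symm)
end
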